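/- arXiv:2209.12718 — 5 statements merged into one kernel-verified Lean document; each statement's English description precedes it below -/
import Mathlib

section
/- Let (R, m) be a Noetherian local ring of positive depth and x ∈ m a non-zerodivisor on R. If R satisfies (SACC), then R/xR satisfies (SAC). -/
open CategoryTheory

/-- The `i`-th Ext group of `R`-modules `M` and `N`. -/
noncomputable abbrev ExtGroup (R : Type) [CommRing R] (M N : ModuleCat.{0} R) (i : ℕ) : Type :=
  (((Ext R (ModuleCat.{0} R) i).obj (Opposite.op M)).obj N)

/-- The symmetric Auslander condition (SAC): for every finitely generated `R`-module `M`,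
if `Ext^i(M,R) = 0` for all `i > 0` and `Ext^i(M,M) = 0` for `i ≫ 0`,
then `Ext^i(M,M) = 0` for all `i > 0`. -/
def SAC (R : Type) [CommRing R] : Prop :=
  ∀ M : ModuleCat.{0} R, Module.Finite R M →
    (∀ i : ℕ, 0 < i → Subsingleton (ExtGroup R M (ModuleCat.of R R) i)) →
    (∃ N : ℕ, ∀ i : ℕ, N < i → Subsingleton (ExtGroup R M M i)) →
    ∀ i : ℕ, 0 < i → Subsingleton (ExtGroup R M M i)

/-- `M` has constant rank `r`: the localization of `M` at every associated prime of `R`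
is free of rank `r`. -/
def HasConstRank (R : Type) [CommRing R] (M : ModuleCat.{0} R) (r : ℕ) : Prop :=
  ∀ (p : Ideal R) [p.IsPrime], p ∈ associatedPrimes R R →
    Nonempty ((LocalizedModule p.primeCompl M) ≃ₗ[Localization.AtPrime p]
      (Fin r → Localization.AtPrime p))

/-- The symmetric Auslander condition for modules with constant rank (SACC). -/
def SACC (R : Type) [CommRing R] : Prop :=
  ∀ M : ModuleCat.{0} R, Module.Finite R M → (∃ r : ℕ, HasConstRank R M r) →
    (∀ i : ℕ, 0 < i → Subsingleton (ExtGroup R M (ModuleCat.of R R) i)) →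
    (∃ N : ℕ, ∀ i : ℕ, N < i → Subsingleton (ExtGroup R M M i)) →
    ∀ i : ℕ, 0 < i → Subsingleton (ExtGroup R M M i)


section AuxExt

theorem extGroup_iff (R : Type) [CommRing R] (M N : ModuleCat.{0} R) (i : ℕ) :
    Subsingleton (ExtGroup R M N (i+1)) ↔ Subsingleton (Abelian.Ext.{0} M N (i+1)) := by
  let P := ProjectiveResolution.of M
  have h1 : Subsingleton (ExtGroup R M N (i+1)) ↔
      (∀ f : P.complex.X (i+1) ⟶ N, P.complex.d (i+2) (i+1) ≫ f = 0 →
        ∃ g : P.complex.X i ⟶ N, P.complex.d (i+1) i ≫ g = f) := by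
    rw [← ModuleCat.isZero_iff_subsingleton, (P.isoExt (i+1) N).isZero_iff,
      ← HomologicalComplex.exactAt_iff_isZero_homology,
      HomologicalComplex.exactAt_iff' _ i (i+1) (i+2) (by simp) (by simp),
      ShortComplex.moduleCat_exact_iff]
    rfl
  have h2 : Subsingleton (Abelian.Ext.{0} M N (i+1)) ↔
      (∀ f : P.complex.X (i+1) ⟶ N, P.complex.d (i+2) (i+1) ≫ f = 0 →
        ∃ g : P.complex.X i ⟶ N, P.complex.d (i+1) i ≫ g = f) := by
    constructor
    · intro h f hf
      exact (P.extMk_eq_zero_iff f (i+2) rfl hf i rfl).1 (Subsingleton.elim _ _)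
    · intro h
      refine subsingleton_of_forall_eq 0 fun e => ?_
      obtain ⟨f, hf, rfl⟩ := P.extMk_surjective e (i+2) rfl
      exact (P.extMk_eq_zero_iff f (i+2) rfl hf i rfl).2 (h f hf)
  rw [h1, h2]

/-- Vanishing of `Ext^i`. -/
def EV (R : Type) [CommRing R] (A B : Type) [AddCommGroup A] [Module R A] [AddCommGroup B]
    [Module R B] (i : ℕ) : Prop :=
  Subsingleton (Abelian.Ext.{0} (ModuleCat.of R A) (ModuleCat.of R B) i)

variable {R : Type} [CommRing R] {A B C : Type} [AddCommGroup A] [Module R A]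
  [AddCommGroup B] [Module R B] [AddCommGroup C] [Module R C]
  {X : Type} [AddCommGroup X] [Module R X]

theorem sesMk (f : A →ₗ[R] B) (g : B →ₗ[R] C) (hf : Function.Injective f)
    (hg : Function.Surjective g) (hfg : Function.Exact f g) :
    (ShortComplex.mk (ModuleCat.ofHom f) (ModuleCat.ofHom g)
      (by rw [← ModuleCat.ofHom_comp, hfg.linearMap_comp_eq_zero]; rfl)).ShortExact := by
  refine ShortComplex.ShortExact.mk' ?_ ?_ ?_
  · rw [ShortComplex.ShortExact.moduleCat_exact_iff_function_exact]; exact hfg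
  · exact (ModuleCat.mono_iff_injective _).2 hf
  · exact (ModuleCat.epi_iff_surjective _).2 hg

theorem EV.contra2 (f : A →ₗ[R] B) (g : B →ₗ[R] C) (hf : Function.Injective f)
    (hg : Function.Surjective g) (hfg : Function.Exact f g) {i : ℕ}
    (h1 : EV R A X i) (h3 : EV R C X i) : EV R B X i := by
  refine subsingleton_of_forall_eq 0 fun e => ?_
  obtain ⟨y, hy⟩ := Abelian.Ext.contravariant_sequence_exact₂ (sesMk f g hf hg hfg)
    (ModuleCat.of R X) e (h1.elim _ _)
  rw [← hy, h3.elim y 0, Abelian.Ext.comp_zero]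

theorem EV.contra3 (f : A →ₗ[R] B) (g : B →ₗ[R] C) (hf : Function.Injective f)
    (hg : Function.Surjective g) (hfg : Function.Exact f g) {i : ℕ}
    (h1 : EV R A X i) (h3 : EV R B X (i+1)) : EV R C X (i+1) := by
  refine subsingleton_of_forall_eq 0 fun e => ?_
  obtain ⟨y, hy⟩ := Abelian.Ext.contravariant_sequence_exact₃ (sesMk f g hf hg hfg)
    (ModuleCat.of R X) e (h3.elim _ _) (add_comm 1 i)
  rw [← hy, h1.elim y 0, Abelian.Ext.comp_zero]

theorem EV.contra1 (f : A →ₗ[R] B) (g : B →ₗ[R] C) (hf : Function.Injective f)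
    (hg : Function.Surjective g) (hfg : Function.Exact f g) {i : ℕ}
    (h1 : EV R B X i) (h3 : EV R C X (i+1)) : EV R A X i := by
  refine subsingleton_of_forall_eq 0 fun e => ?_
  obtain ⟨y, hy⟩ := Abelian.Ext.contravariant_sequence_exact₁ (sesMk f g hf hg hfg)
    (ModuleCat.of R X) e (add_comm 1 i) (h3.elim _ _)
  rw [← hy, h1.elim y 0, Abelian.Ext.comp_zero]

theorem EV.co1 (f : A →ₗ[R] B) (g : B →ₗ[R] C) (hf : Function.Injective f)
    (hg : Function.Surjective g) (hfg : Function.Exact f g) {i : ℕ}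
    (h1 : EV R X C i) (h3 : EV R X B (i+1)) : EV R X A (i+1) := by
  refine subsingleton_of_forall_eq 0 fun e => ?_
  obtain ⟨y, hy⟩ := Abelian.Ext.covariant_sequence_exact₁ 
    (ModuleCat.of R X) (sesMk f g hf hg hfg) e (h3.elim _ _) rfl
  rw [← hy, h1.elim y 0, Abelian.Ext.zero_comp]

theorem EV.co3 (f : A →ₗ[R] B) (g : B →ₗ[R] C) (hf : Function.Injective f)
    (hg : Function.Surjective g) (hfg : Function.Exact f g) {i : ℕ}
    (h1 : EV R X B i) (h3 : EV R X A (i+1)) : EV R X C i := by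
  refine subsingleton_of_forall_eq 0 fun e => ?_
  obtain ⟨y, hy⟩ := Abelian.Ext.covariant_sequence_exact₃
    (ModuleCat.of R X) (sesMk f g hf hg hfg) e rfl (h3.elim _ _)
  rw [← hy, h1.elim y 0, Abelian.Ext.zero_comp]

theorem EV.proj [Module.Projective R A] (i : ℕ) : EV R A X (i+1) :=
  Abelian.Ext.subsingleton_of_projective _ _ i

theorem EV.pi {n : ℕ} {i : ℕ} (h : EV R X R i) : EV R X (Fin n → R) i := by
  refine subsingleton_of_forall_eq 0 fun e => ?_
  have hid : 𝟙 (ModuleCat.of R (Fin n → R)) = ∑ j : Fin n,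
      ModuleCat.ofHom (LinearMap.proj (R := R) (φ := fun _ : Fin n => R) j) ≫
        ModuleCat.ofHom (LinearMap.single R (fun _ : Fin n => R) j) := by
    ext1
    simp only [ModuleCat.hom_id, ModuleCat.hom_sum, ModuleCat.hom_comp, ModuleCat.hom_ofHom]
    refine LinearMap.ext fun v => ?_
    ext k
    simp [Finset.sum_apply, Pi.single_apply]
  rw [← Abelian.Ext.comp_mk₀_id e, hid, Abelian.Ext.mk₀_sum, Abelian.Ext.comp_sum]
  refine Finset.sum_eq_zero fun j _ => ?_
  rw [← Abelian.Ext.mk₀_comp_mk₀, ← Abelian.Ext.comp_assoc_of_third_deg_zero]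
  rw [h.elim (e.comp _ _) 0, Abelian.Ext.zero_comp]

theorem EV.one_iff (f : A →ₗ[R] B) (g : B →ₗ[R] C) (hf : Function.Injective f)
    (hg : Function.Surjective g) (hfg : Function.Exact f g) [Module.Projective R B] :
    EV R C X 1 ↔ ∀ h : A →ₗ[R] X, ∃ k : B →ₗ[R] X, k ∘ₗ f = h := by
  constructor
  · intro H h
    obtain ⟨y, hy⟩ := Abelian.Ext.contravariant_sequence_exact₁ (sesMk f g hf hg hfg)
      (ModuleCat.of R X) (Abelian.Ext.mk₀ (ModuleCat.ofHom h)) (add_comm 1 0) (H.elim _ _)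
    obtain ⟨k, rfl⟩ := (Abelian.Ext.mk₀_bijective _ _).2 y
    rw [Abelian.Ext.mk₀_comp_mk₀] at hy
    have := (Abelian.Ext.mk₀_bijective _ _).1 hy
    refine ⟨k.hom, ?_⟩
    have := congrArg ModuleCat.Hom.hom this
    simpa using this
  · intro H
    refine subsingleton_of_forall_eq 0 fun e => ?_
    obtain ⟨y, hy⟩ := Abelian.Ext.contravariant_sequence_exact₃ (sesMk f g hf hg hfg)
      (ModuleCat.of R X) e ((EV.proj (R := R) (A := B) (X := X) 0).elim _ _) (add_comm 1 0)
    obtain ⟨h, rfl⟩ := (Abelian.Ext.mk₀_bijective _ _).2 y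
    obtain ⟨k, hk⟩ := H h.hom
    have : h = ModuleCat.ofHom f ≫ ModuleCat.ofHom k := by
      ext1; simpa using hk.symm
    rw [← hy, this, ← Abelian.Ext.mk₀_comp_mk₀]
    exact (sesMk f g hf hg hfg).extClass_comp_assoc _

theorem EV.nakayama [IsNoetherianRing R] [IsLocalRing R] {x : R}
    (hx : x ∈ IsLocalRing.maximalIdeal R) (hreg : IsSMulRegular R x) [Module.Finite R A] {i : ℕ}
    (h : EV R A (R ⧸ Ideal.span {x}) i) : EV R A R i := by
  have hses := sesMk (R := R) (LinearMap.lsmul R R x) (Ideal.span {x}).mkQ hreg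
    (Submodule.mkQ_surjective _) (by
      rw [LinearMap.exact_iff, Submodule.ker_mkQ]
      ext y
      simp [Ideal.mem_span_singleton', mul_comm])
  have hfin : Module.Finite R (Abelian.Ext.{0} (ModuleCat.of R A) (ModuleCat.of R R) i) :=
    inferInstance
  have : (⊤ : Submodule R (Abelian.Ext.{0} (ModuleCat.of R A) (ModuleCat.of R R) i)) = ⊥ := by
    refine Submodule.eq_bot_of_le_smul_of_le_jacobson_bot (Ideal.span {x}) _ hfin.fg_top ?_ ?_
    · intro e _
      obtain ⟨y, hy⟩ := Abelian.Ext.covariant_sequence_exact₂ (ModuleCat.of R A) hses e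
        (h.elim _ _)
      have : ModuleCat.ofHom (LinearMap.lsmul R R x) = x • 𝟙 (ModuleCat.of R R) := by
        ext1; ext; simp
      dsimp only at hy
      rw [this, ← Abelian.Ext.smul_eq_comp_mk₀] at hy
      rw [← hy]
      exact Submodule.smul_mem_smul (Ideal.mem_span_singleton_self x) trivial
    · rw [IsLocalRing.jacobson_eq_maximalIdeal ⊥ bot_ne_top]
      simpa [Ideal.span_le] using hx
  exact (Submodule.subsingleton_iff R).1 (subsingleton_of_bot_eq_top this.symm)

end AuxExt

section AuxChange

/-- Syzygies are compatible with reduction modulo `x`. -/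
theorem exists_syzygies {R S : Type} [CommRing R] [CommRing S] [Algebra R S] {x : R}
    (hreg : IsSMulRegular R x) (hS : Function.Surjective (algebraMap R S))
    (hker : ∀ r : R, algebraMap R S r = 0 → ∃ s, r = x * s) (hx0 : algebraMap R S x = 0)
    {N N' : Type} [AddCommGroup N] [Module R N] [AddCommGroup N'] [Module R N'] [Module S N']
      [IsScalarTower R S N'] (π : N →ₗ[R] N') (hπ : Function.Surjective π)
      (hk : ∀ a, π a = 0 → ∃ b, a = x • b) (hr : IsSMulRegular N x) :
    ∃ (g : (N →₀ R) →ₗ[R] N) (g' : (N →₀ S) →ₗ[S] N') (σ : (N →₀ R) →ₗ[R] (N →₀ S))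
      (τ : LinearMap.ker g →ₗ[R] LinearMap.ker g'),
      Function.Surjective g ∧ Function.Surjective g' ∧ Function.Surjective σ ∧
      Function.Surjective τ ∧ (∀ a, σ a = 0 → ∃ b, a = x • b) ∧
      (∀ a, τ a = 0 → ∃ b, a = x • b) ∧ IsSMulRegular (LinearMap.ker g) x ∧
      (∀ a, (τ a : N →₀ S) = σ a) := by
  let g : (N →₀ R) →ₗ[R] N := Finsupp.linearCombination R id
  let g' : (N →₀ S) →ₗ[S] N' := Finsupp.linearCombination S π
  let σ : (N →₀ R) →ₗ[R] (N →₀ S) := Finsupp.mapRange.linearMap (Algebra.linearMap R S)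
  have hg : Function.Surjective g := fun n => ⟨Finsupp.single n 1, by simp [g]⟩
  have hg' : Function.Surjective g' := fun n => by
    obtain ⟨m, rfl⟩ := hπ n
    exact ⟨Finsupp.single m 1, by simp [g']⟩
  have hσ : Function.Surjective σ := Finsupp.mapRange_surjective _ (by simp) hS
  have hσk : ∀ a, σ a = 0 → ∃ b, a = x • b := by
    intro a ha
    have h1 : ∀ n, ∃ s, a n = x * s := fun n => hker _ (by
      simpa [σ] using DFunLike.congr_fun ha n)
    choose s hs using h1
    refine ⟨Finsupp.onFinset a.support s (fun n hn => ?_), ?_⟩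
    · rw [Finsupp.mem_support_iff]
      intro h0
      apply hn
      apply hreg
      simpa [← hs n] using h0
    · ext n; simpa using hs n
  have hcomm : ∀ a, g' (σ a) = π (g a) := by
    intro a
    have : (g'.restrictScalars R) ∘ₗ σ = π ∘ₗ g := by
      ext n; simp [g, g', σ]
    exact LinearMap.congr_fun this a
  let τ : LinearMap.ker g →ₗ[R] LinearMap.ker g' :=
    { toFun := fun a => ⟨σ a, by simp [hcomm]⟩
      map_add' := fun a b => by ext1; simp
      map_smul' := fun a b => by ext1; simp }
  have hFreg : IsSMulRegular (N →₀ R) x := by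
    intro a b hab
    ext n
    apply hreg
    simpa using DFunLike.congr_fun hab n
  refine ⟨g, g', σ, τ, hg, hg', hσ, ?_, hσk, ?_, ?_, fun a => rfl⟩
  · rintro ⟨k, hk'⟩
    obtain ⟨f, rfl⟩ := hσ k
    obtain ⟨n, hn⟩ := hk (g f) (by rw [← hcomm]; exact hk')
    obtain ⟨f2, rfl⟩ := hg n
    refine ⟨⟨f - x • f2, by simp [hn]⟩, ?_⟩
    ext1
    have h0 : σ (x • f2) = 0 := by
      rw [map_smul, ← algebraMap_smul S x, hx0, zero_smul]
    simp only [τ, LinearMap.coe_mk, AddHom.coe_mk, map_sub, h0, sub_zero]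
  · rintro ⟨a, ha⟩ h
    obtain ⟨b, rfl⟩ := hσk a (congrArg Subtype.val h)
    refine ⟨⟨b, ?_⟩, rfl⟩
    rw [LinearMap.mem_ker, map_smul] at ha
    rw [LinearMap.mem_ker]
    apply hr
    simpa using ha
  · intro a b hab
    ext1
    exact hFreg (congrArg Subtype.val hab)

theorem evBaseChange {R S : Type} [CommRing R] [CommRing S] [Algebra R S] {x : R}
    (hreg : IsSMulRegular R x) (hS : Function.Surjective (algebraMap R S))
    (hker : ∀ r : R, algebraMap R S r = 0 → ∃ s, r = x * s) (hx0 : algebraMap R S x = 0)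
    {M : Type} [AddCommGroup M] [Module R M] [Module S M] [IsScalarTower R S M] (i : ℕ) :
    ∀ {N N' : Type} [AddCommGroup N] [Module R N] [AddCommGroup N'] [Module R N'] [Module S N']
      [IsScalarTower R S N'] (π : N →ₗ[R] N') (_ : Function.Surjective π)
      (_ : ∀ a, π a = 0 → ∃ b, a = x • b) (_ : IsSMulRegular N x),
      EV R N M (i+1) ↔ EV S N' M (i+1) := by
  have hxM : ∀ m : M, x • m = 0 := fun m => by rw [← algebraMap_smul S x m, hx0, zero_smul]
  have fac : ∀ {A A' : Type} [AddCommGroup A] [Module R A] [AddCommGroup A'] [Module R A']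
      [Module S A'] [IsScalarTower R S A'] (p : A →ₗ[R] A') (_ : Function.Surjective p)
      (_ : ∀ a, p a = 0 → ∃ b, a = x • b) (h : A →ₗ[R] M),
      ∃ h' : A' →ₗ[S] M, ∀ a, h' (p a) = h a := by
    intro A A' _ _ _ _ _ _ p hp hk h
    have hle : LinearMap.ker p ≤ LinearMap.ker h := by
      intro a ha
      obtain ⟨b, rfl⟩ := hk a ha
      rw [LinearMap.mem_ker, map_smul, hxM]
    let e := p.quotKerEquivOfSurjective hp
    let h0 : A' →ₗ[R] M := ((LinearMap.ker p).liftQ h hle) ∘ₗ e.symm.toLinearMap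
    refine ⟨h0.extendScalarsOfSurjective hS, fun a => ?_⟩
    have : e.symm (p a) = Submodule.Quotient.mk a := by
      rw [LinearEquiv.symm_apply_eq]; rfl
    change (LinearMap.ker p).liftQ h hle (e.symm (p a)) = h a
    rw [this]; rfl
  induction i with
  | zero =>
    intro N N' _ _ _ _ _ _ π hπ hk hr
    obtain ⟨g, g', σ, τ, hg, hg', hσ, hτ, hσk, hτk, hKr, hτσ⟩ :=
      exists_syzygies hreg hS hker hx0 π hπ hk hr
    rw [zero_add, EV.one_iff (A := LinearMap.ker g) (LinearMap.ker g).subtype g (Submodule.injective_subtype _) hg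
      (LinearMap.exact_subtype_ker_map g), EV.one_iff (A := LinearMap.ker g') (LinearMap.ker g').subtype g'
      (Submodule.injective_subtype _) hg' (LinearMap.exact_subtype_ker_map g')]
    constructor
    · intro H h'
      obtain ⟨k, hk⟩ := H ((h'.restrictScalars R) ∘ₗ τ)
      obtain ⟨k', hk'⟩ := fac σ hσ hσk k
      refine ⟨k', LinearMap.ext fun a => ?_⟩
      obtain ⟨b, rfl⟩ := hτ a
      have := LinearMap.congr_fun hk b
      simp only [LinearMap.comp_apply, Submodule.subtype_apply] at this ⊢
      rw [hτσ, hk', this]; rfl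
    · intro H h
      obtain ⟨h', hh'⟩ := fac (A := LinearMap.ker g) (A' := LinearMap.ker g') τ hτ hτk h
      obtain ⟨k', hk'⟩ := H h'
      refine ⟨(k'.restrictScalars R) ∘ₗ σ, LinearMap.ext fun a => ?_⟩
      rw [← hh', ← hk']
      simp [hτσ]
  | succ i ih =>
    intro N N' _ _ _ _ _ _ π hπ hk hr
    obtain ⟨g, g', σ, τ, hg, hg', hσ, hτ, hσk, hτk, hKr, hτσ⟩ :=
      exists_syzygies hreg hS hker hx0 π hπ hk hr
    have h1 := LinearMap.exact_subtype_ker_map g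
    have h2 := LinearMap.exact_subtype_ker_map g'
    have i1 := Submodule.injective_subtype (LinearMap.ker g)
    have i2 := Submodule.injective_subtype (LinearMap.ker g')
    have e := ih (N := LinearMap.ker g) (N' := LinearMap.ker g') τ hτ hτk hKr
    exact ⟨fun H => EV.contra3 _ _ i2 hg' h2
        (e.1 (EV.contra1 _ _ i1 hg h1 (EV.proj i) H)) (EV.proj (i+1)),
      fun H => EV.contra3 _ _ i1 hg h1
        (e.2 (EV.contra1 _ _ i2 hg' h2 (EV.proj i) H)) (EV.proj (i+1))⟩

theorem constRank {R : Type} [CommRing R] [IsNoetherianRing R] {x : R}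
    (hreg : IsSMulRegular R x) (n : ℕ) (N : Submodule R (Fin n → R))
    (hN : ∀ v, x • v ∈ N) : HasConstRank R (ModuleCat.of R N) n := by
  intro p _ hp
  have hxp : x ∉ p := by
    intro hxp
    have h := biUnion_associatedPrimes_eq_compl_regular R R
    have : x ∈ (⋃ p ∈ associatedPrimes R R, (p : Set R)) := Set.mem_biUnion hp hxp
    rw [h] at this
    exact this hreg
  let φ : N →ₗ[R] (Fin n → Localization.AtPrime p) :=
    (LinearMap.pi fun j => (Algebra.linearMap R (Localization.AtPrime p)) ∘ₗ LinearMap.proj j)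
      ∘ₗ N.subtype
  have hφ : ∀ a j, φ a j = algebraMap R (Localization.AtPrime p) (a.1 j) := fun a j => rfl
  have : IsLocalizedModule p.primeCompl φ := by
    refine ⟨?_, ?_, ?_⟩
    · intro s
      rw [Module.End.isUnit_iff]
      have hs := IsLocalization.map_units (Localization.AtPrime p) s
      obtain ⟨u, hu⟩ := hs
      have key : ∀ v : Fin n → Localization.AtPrime p,
          algebraMap R (Module.End R (Fin n → Localization.AtPrime p)) s v = u • v := by
        intro v
        rw [Module.algebraMap_end_apply, ← algebraMap_smul (Localization.AtPrime p) (s : R) v, ← hu]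
        rfl
      constructor
      · intro v w hvw
        rw [key, key] at hvw
        exact smul_left_cancel u hvw
      · intro v
        exact ⟨u⁻¹ • v, by rw [key, smul_inv_smul]⟩
    · intro y
      obtain ⟨s, hs⟩ := IsLocalization.exist_integer_multiples_of_finite p.primeCompl y
      choose v hv using hs
      refine ⟨⟨⟨x • v, hN v⟩, ⟨x, hxp⟩ * s⟩, ?_⟩
      ext j
      rw [hφ]
      change (x * (s : R)) • y j = algebraMap R _ (x * v j)
      rw [map_mul, hv j, mul_smul, Algebra.smul_def x]
    · intro a b hab
      have h1 : ∀ j, ∃ c : p.primeCompl, (c : R) * a.1 j = c * b.1 j := fun j =>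
        IsLocalization.exists_of_eq (S := Localization.AtPrime p) (congrFun hab j)
      choose c hc using h1
      refine ⟨∏ j, c j, ?_⟩
      ext j
      change ((∏ j, c j : p.primeCompl) : R) * a.1 j = ((∏ j, c j : p.primeCompl) : R) * b.1 j
      rw [← Finset.prod_erase_mul _ _ (Finset.mem_univ j)]
      simp only [Submonoid.coe_mul, mul_assoc, hc j]
  exact ⟨(IsLocalizedModule.iso p.primeCompl φ).extendScalarsOfIsLocalization p.primeCompl
    (Localization.AtPrime p)⟩

end AuxChange

theorem homAux (R : Type) [CommRing R] [IsNoetherianRing R] [IsLocalRing R]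
    (x : R) (hx : x ∈ IsLocalRing.maximalIdeal R) (hreg : IsSMulRegular R x)
    (hR : SACC R) (M : Type) [AddCommGroup M] [Module (R ⧸ Ideal.span {x}) M]
    [Module R M]
    (hMS : ∀ i, EV (R ⧸ Ideal.span {x}) M (R ⧸ Ideal.span {x}) (i+1))
    (hMM : ∃ n, ∀ i, n ≤ i → EV (R ⧸ Ideal.span {x}) M M (i+1))
    (n : ℕ) (g : (Fin n → R) →ₗ[R] M) (hg : Function.Surjective g)
    (g' : (Fin n → R ⧸ Ideal.span {x}) →ₗ[R ⧸ Ideal.span {x}] M) (hg' : Function.Surjective g')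
    (N N' K : Type) [AddCommGroup N] [Module R N] [Module.Finite R N]
    [AddCommGroup N'] [Module (R ⧸ Ideal.span {x}) N']
    [AddCommGroup K] [Module (R ⧸ Ideal.span {x}) K]
    (ι : N →ₗ[R] (Fin n → R)) (i1 : Function.Injective ι) (s1 : Function.Exact ι g)
    (hrk : HasConstRank R (ModuleCat.of R N) n)
    (ι' : K →ₗ[R ⧸ Ideal.span {x}] (Fin n → R ⧸ Ideal.span {x})) (i2 : Function.Injective ι')
    (s2 : Function.Exact ι' g')
    (hbcS : ∀ i, EV R N (R ⧸ Ideal.span {x}) (i+1) ↔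
      EV (R ⧸ Ideal.span {x}) N' (R ⧸ Ideal.span {x}) (i+1))
    (hbcM : ∀ i, EV R N M (i+1) ↔ EV (R ⧸ Ideal.span {x}) N' M (i+1))
    (α : M →ₗ[R ⧸ Ideal.span {x}] N') (hα : Function.Injective α)
    (β : N' →ₗ[R ⧸ Ideal.span {x}] K) (hβ : Function.Surjective β) (hαβ : Function.Exact α β) :
    ∀ i, EV (R ⧸ Ideal.span {x}) M M (i+1) := by
  have hKshift : ∀ {X : Type} [AddCommGroup X] [Module (R ⧸ Ideal.span {x}) X] (i : ℕ),
      EV (R ⧸ Ideal.span {x}) M X (i+2) → EV (R ⧸ Ideal.span {x}) K X (i+1) :=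
    fun i h => EV.contra1 ι' g' i2 hg' s2 (EV.proj i) h
  have hNR : ∀ i, EV R N R (i+1) := fun i => by
    refine EV.nakayama hx hreg ?_
    rw [hbcS i]
    exact EV.contra2 α β hα hβ hαβ (hMS i) (hKshift i (hMS (i+1)))
  obtain ⟨n0, hn0⟩ := hMM
  have hNN : ∀ i, n0 ≤ i → EV R N N (i+2) := fun i hi => by
    refine EV.co1 ι g i1 hg s1 ?_ (EV.pi (hNR (i+1)))
    rw [hbcM i]
    exact EV.contra2 α β hα hβ hαβ (hn0 i hi) (hKshift i (hn0 (i+1) (by lia)))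
  have hNN' : ∀ i, EV R N N (i+1) := fun i => by
    refine (extGroup_iff R (ModuleCat.of R N) (ModuleCat.of R N) i).1 ?_
    refine hR (ModuleCat.of R N) (inferInstanceAs (Module.Finite R N))
      ⟨n, hrk⟩ ?_ ⟨n0 + 1, ?_⟩ (i+1) i.succ_pos
    · rintro (_ | j) hj
      · lia
      · exact (extGroup_iff _ _ _ _).2 (hNR j)
    · rintro (_ | _ | j) hj
      · lia
      · lia
      · exact (extGroup_iff _ _ _ _).2 (hNN j (by lia))
  have hN'M : ∀ i, EV (R ⧸ Ideal.span {x}) N' M (i+1) := fun i => by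
    rw [← hbcM i]
    exact EV.co3 ι g i1 hg s1 (EV.pi (hNR i)) (hNN' (i+1))
  have step : ∀ i, EV (R ⧸ Ideal.span {x}) M M (i+3) → EV (R ⧸ Ideal.span {x}) M M (i+1) :=
    fun i h => EV.contra1 α β hα hβ hαβ (hN'M i) (hKshift (i+1) h)
  have desc : ∀ k i, n0 ≤ i + 2 * k → EV (R ⧸ Ideal.span {x}) M M (i+1) := by
    intro k
    induction k with
    | zero => exact fun i hi => hn0 i (by lia)
    | succ k ih => exact fun i hi => step i (ih (i+2) (by lia))
  exact fun i => desc n0 i (by lia)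

theorem mainAux (R : Type) [CommRing R] [IsNoetherianRing R] [IsLocalRing R]
    (x : R) (hx : x ∈ IsLocalRing.maximalIdeal R) (hreg : IsSMulRegular R x)
    (hR : SACC R) (M : Type) [AddCommGroup M] [Module (R ⧸ Ideal.span {x}) M]
    [Module R M] [IsScalarTower R (R ⧸ Ideal.span {x}) M]
    [Module.Finite (R ⧸ Ideal.span {x}) M]
    (hMS : ∀ i, EV (R ⧸ Ideal.span {x}) M (R ⧸ Ideal.span {x}) (i+1))
    (hMM : ∃ n, ∀ i, n ≤ i → EV (R ⧸ Ideal.span {x}) M M (i+1)) :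
    ∀ i, EV (R ⧸ Ideal.span {x}) M M (i+1) := by
  have hS : Function.Surjective (algebraMap R (R ⧸ Ideal.span {x})) := Ideal.Quotient.mk_surjective
  have hker : ∀ r : R, algebraMap R (R ⧸ Ideal.span {x}) r = 0 → ∃ s, r = x * s := by
    intro r hr
    exact Ideal.mem_span_singleton.1 (Ideal.Quotient.eq_zero_iff_mem.1 hr)
  have hx0 : algebraMap R (R ⧸ Ideal.span {x}) x = 0 :=
    Ideal.Quotient.eq_zero_iff_mem.2 (Ideal.mem_span_singleton_self x)
  have hbc := @evBaseChange R (R ⧸ Ideal.span {x}) _ _ _ x hreg hS hker hx0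
  have hx0' : ∀ {A : Type} [AddCommGroup A] [Module R A] [Module (R ⧸ Ideal.span {x}) A]
      [IsScalarTower R (R ⧸ Ideal.span {x}) A] (a : A), x • a = 0 := by
    intro A _ _ _ _ a
    rw [← algebraMap_smul (R ⧸ Ideal.span {x}) x a, hx0, zero_smul]
  obtain ⟨n, g', hg'⟩ := Module.Finite.exists_fin' (R ⧸ Ideal.span {x}) M
  let σ : (Fin n → R) →ₗ[R] (Fin n → R ⧸ Ideal.span {x}) :=
    (Algebra.linearMap R (R ⧸ Ideal.span {x})).compLeft (Fin n)
  have hσ : Function.Surjective σ := fun v => by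
    choose w hw using fun j => hS (v j)
    exact ⟨w, funext hw⟩
  have hσk : ∀ a, σ a = 0 → ∃ b, a = x • b := by
    intro a ha
    choose w hw using fun j => hker (a j) (congrFun ha j)
    exact ⟨w, funext hw⟩
  let g : (Fin n → R) →ₗ[R] M := (g'.restrictScalars R) ∘ₗ σ
  have hg : Function.Surjective g := hg'.comp hσ
  have hFreg : IsSMulRegular (Fin n → R) x := by
    intro a b hab
    ext j
    exact hreg (congrFun hab j)
  let N := LinearMap.ker g
  have hxN : ∀ v, x • v ∈ N := fun v => by
    rw [LinearMap.mem_ker, map_smul, hx0']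
  have hNreg : IsSMulRegular N x := fun a b hab => Subtype.ext (hFreg (congrArg Subtype.val hab))
  let N' := N ⧸ (Ideal.span {x} • ⊤ : Submodule R N)
  have : IsScalarTower R (R ⧸ Ideal.span {x}) N' := IsScalarTower.of_algebraMap_smul (by
    intro r a
    obtain ⟨a, rfl⟩ := Submodule.Quotient.mk_surjective _ a
    rfl)
  let π : N →ₗ[R] N' := Submodule.mkQ _
  have hπ : Function.Surjective π := Submodule.mkQ_surjective _
  have hπk : ∀ a, π a = 0 → ∃ b, a = x • b := by
    intro a ha
    have ha : a ∈ (Ideal.span {x} • ⊤ : Submodule R N) := (Submodule.Quotient.mk_eq_zero _).1 ha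
    rw [Submodule.ideal_span_singleton_smul, Submodule.mem_smul_pointwise_iff_exists] at ha
    obtain ⟨b, _, hb⟩ := ha
    exact ⟨b, hb.symm⟩
  let K := LinearMap.ker g'
  let τ : N →ₗ[R] K :=
    { toFun := fun a => ⟨σ a, a.2⟩
      map_add' := fun a b => by ext1; simp
      map_smul' := fun a b => by ext1; simp }
  let β0 : N' →ₗ[R] K := Submodule.liftQ _ τ (by
    rw [Submodule.ideal_span_singleton_smul]
    intro a ha
    rw [Submodule.mem_smul_pointwise_iff_exists] at ha
    obtain ⟨b, _, rfl⟩ := ha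
    rw [LinearMap.mem_ker, map_smul]
    exact hx0' (A := K) (τ b))
  let β : N' →ₗ[R ⧸ Ideal.span {x}] K := β0.extendScalarsOfSurjective hS
  have hβπ : ∀ a, β (π a) = τ a := fun a => rfl
  have hβ : Function.Surjective β := by
    rintro ⟨k, hk⟩
    obtain ⟨v, rfl⟩ := hσ k
    exact ⟨π ⟨v, hk⟩, rfl⟩
  let φ : (Fin n → R) →ₗ[R] N' := π ∘ₗ
    { toFun := fun v => (⟨x • v, hxN v⟩ : N)
      map_add' := fun a b => by ext1; simp
      map_smul' := fun a b => by ext1; simp [smul_comm x] }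
  have hφ : ∀ v, φ v = π ⟨x • v, hxN v⟩ := fun v => rfl
  have hφk : ∀ v, g v = 0 ↔ φ v = 0 := by
    intro v
    constructor
    · intro hv
      have : (⟨x • v, hxN v⟩ : N) = x • (⟨v, hv⟩ : N) := rfl
      rw [hφ, this, map_smul, hx0']
    · intro hv
      obtain ⟨b, hb⟩ := hπk _ hv
      have : v = b.1 := hFreg (congrArg Subtype.val hb)
      rw [this]; exact b.2
  let e := g.quotKerEquivOfSurjective hg
  let α0 : M →ₗ[R] N' := ((LinearMap.ker g).liftQ φ (fun v hv => (hφk v).1 hv)) ∘ₗ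
    e.symm.toLinearMap
  let α : M →ₗ[R ⧸ Ideal.span {x}] N' := α0.extendScalarsOfSurjective hS
  have hαg : ∀ v, α (g v) = φ v := by
    intro v
    have : e.symm (g v) = Submodule.Quotient.mk v := by
      rw [LinearEquiv.symm_apply_eq]; rfl
    change (LinearMap.ker g).liftQ φ (fun v hv => (hφk v).1 hv) (e.symm (g v)) = φ v
    rw [this]; rfl
  have hα : Function.Injective α := by
    rw [injective_iff_map_eq_zero]
    intro m hm
    obtain ⟨v, rfl⟩ := hg m
    rw [hαg] at hm
    exact (hφk v).2 hm
  have hαβ : Function.Exact α β := by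
    intro y
    obtain ⟨a, rfl⟩ := hπ y
    constructor
    · intro h
      obtain ⟨b, hb⟩ := hσk a.1 (congrArg Subtype.val h)
      exact ⟨g b, by rw [hαg, hφ]; congr 1; exact Subtype.ext hb.symm⟩
    · rintro ⟨m, hm⟩
      obtain ⟨v, rfl⟩ := hg m
      rw [← hm, hαg, hφ, hβπ]
      ext1
      change σ (x • v) = 0
      rw [map_smul, hx0']
  exact homAux R x hx hreg hR M hMS hMM n g hg g' hg' N N' K (LinearMap.ker g).subtype
    (Submodule.injective_subtype _) (LinearMap.exact_subtype_ker_map g)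
    (constRank hreg n N hxN) (LinearMap.ker g').subtype
    (Submodule.injective_subtype _) (LinearMap.exact_subtype_ker_map g')
    (fun i => hbc i π hπ hπk hNreg) (fun i => hbc i π hπ hπk hNreg) α hα β hβ hαβ

/-- If `R` is a Noetherian local ring of positive depth, `x` a non-zerodivisor in the
maximal ideal, and `R` satisfies (SACC), then `R/xR` satisfies (SAC). -/
theorem stmt_3 (R : Type) [CommRing R] [IsNoetherianRing R] [IsLocalRing R]
    (hdepth : ∃ y ∈ IsLocalRing.maximalIdeal R, IsSMulRegular R y)
    (x : R) (hx : x ∈ IsLocalRing.maximalIdeal R) (hreg : IsSMulRegular R x)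
    (hR : SACC R) : SAC (R ⧸ Ideal.span {x}) := by
  intro M hfin h1 h2 i hi
  let : Module R M := Module.compHom M (algebraMap R (R ⧸ Ideal.span {x}))
  have : IsScalarTower R (R ⧸ Ideal.span {x}) M :=
    IsScalarTower.of_algebraMap_smul (fun r m => rfl)
  obtain ⟨n, hn⟩ := h2
  have key := mainAux R x hx hreg hR M
    (fun j => (extGroup_iff _ _ _ _).1 (h1 (j+1) j.succ_pos))
    ⟨n, fun j hj => (extGroup_iff _ _ _ _).1 (hn (j+1) (by lia))⟩
  obtain ⟨j, rfl⟩ : ∃ j, i = j + 1 := ⟨i - 1, by lia⟩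
  exact (extGroup_iff _ _ _ _).2 (key j)
end

section
/- Let (R, m) be a Noetherian local ring of positive depth. Then R satisfies (SAC) if and only if R satisfies (SACC). -/
open CategoryTheory

open Abelian
section Aux
variable {R : Type} [CommRing R]

lemma ext_bridge (M N : ModuleCat.{0} R) (n : ℕ) :
    Subsingleton (ExtGroup R M N (n+1)) ↔ Subsingleton (Abelian.Ext M N (n+1)) := by
  let P := ProjectiveResolution.of M
  have e := (P.isoExt (R := R) (n+1) N)
  have h1 : Subsingleton (ExtGroup R M N (n+1)) ↔
      ((P.complex.linearYonedaObj R N).sc' n (n+1) (n+2)).Exact := by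
    rw [← HomologicalComplex.exactAt_iff' _ n (n+1) (n+2) (by simp) (by simp),
      HomologicalComplex.exactAt_iff_isZero_homology, ← e.isZero_iff,
      ModuleCat.isZero_iff_subsingleton]
  have h2 : ((P.complex.linearYonedaObj R N).sc' n (n+1) (n+2)).Exact ↔ 
      ∀ f : P.complex.X (n+1) ⟶ N, P.complex.d (n+2) (n+1) ≫ f = 0 →
        ∃ g : P.complex.X n ⟶ N, P.complex.d (n+1) n ≫ g = f := by
    rw [ShortComplex.moduleCat_exact_iff]
    rfl
  rw [h1, h2]
  constructor
  · intro h
    refine subsingleton_of_forall_eq 0 fun y => ?_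
    obtain ⟨f, hf, rfl⟩ := P.extMk_surjective y (n+2) rfl
    rw [P.extMk_eq_zero_iff f (n+2) rfl hf n rfl]
    exact h f hf
  · intro h f hf
    rw [← P.extMk_eq_zero_iff f (n+2) rfl hf n rfl]
    exact Subsingleton.elim _ _

section
variable {S : ShortComplex (ModuleCat.{0} R)}

lemma van_contra1 (hS : S.ShortExact) (Y : ModuleCat.{0} R) (n : ℕ)
    (h2 : Subsingleton (Abelian.Ext S.X₂ Y n))
    (h3 : Subsingleton (Abelian.Ext S.X₃ Y (n+1))) : Subsingleton (Abelian.Ext S.X₁ Y n) := by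
  refine subsingleton_of_forall_eq 0 fun y => ?_
  obtain ⟨z, rfl⟩ := Ext.contravariant_sequence_exact₁ hS Y y (add_comm 1 n) (Subsingleton.elim _ _)
  rw [Subsingleton.elim z 0, Ext.comp_zero]

lemma van_contra3 (hS : S.ShortExact) (Y : ModuleCat.{0} R) (n : ℕ)
    (h1 : Subsingleton (Abelian.Ext S.X₁ Y n))
    (h2 : Subsingleton (Abelian.Ext S.X₂ Y (n+1))) : Subsingleton (Abelian.Ext S.X₃ Y (n+1)) := by
  refine subsingleton_of_forall_eq 0 fun y => ?_
  obtain ⟨z, rfl⟩ := Ext.contravariant_sequence_exact₃ hS Y y (Subsingleton.elim _ _) (add_comm 1 n)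
  rw [Subsingleton.elim z 0, Ext.comp_zero]

lemma van_cov1 (hS : S.ShortExact) (Y : ModuleCat.{0} R) (n : ℕ)
    (h3 : Subsingleton (Abelian.Ext Y S.X₃ n))
    (h2 : Subsingleton (Abelian.Ext Y S.X₂ (n+1))) : Subsingleton (Abelian.Ext Y S.X₁ (n+1)) := by
  refine subsingleton_of_forall_eq 0 fun y => ?_
  obtain ⟨z, rfl⟩ := Ext.covariant_sequence_exact₁ Y hS y (Subsingleton.elim _ _) rfl
  rw [Subsingleton.elim z 0, Ext.zero_comp]

lemma van_cov3 (hS : S.ShortExact) (Y : ModuleCat.{0} R) (n : ℕ)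
    (h2 : Subsingleton (Abelian.Ext Y S.X₂ n))
    (h1 : Subsingleton (Abelian.Ext Y S.X₁ (n+1))) : Subsingleton (Abelian.Ext Y S.X₃ n) := by
  refine subsingleton_of_forall_eq 0 fun y => ?_
  obtain ⟨z, rfl⟩ := Ext.covariant_sequence_exact₃ Y hS y rfl (Subsingleton.elim _ _)
  rw [Subsingleton.elim z 0, Ext.zero_comp]
end

lemma van_free (M : ModuleCat.{0} R) (k n : ℕ)
    (h : Subsingleton (Abelian.Ext M (ModuleCat.of R R) n)) :
    Subsingleton (Abelian.Ext M (ModuleCat.of R (Fin k → R)) n) := by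
  refine subsingleton_of_forall_eq 0 fun y => ?_
  have key : ∀ s : Finset (Fin k), y.comp (Ext.mk₀ (∑ i ∈ s,
      (ModuleCat.ofHom (LinearMap.proj i) : ModuleCat.of R (Fin k → R) ⟶ ModuleCat.of R R) ≫
      ModuleCat.ofHom (LinearMap.single R (fun _ => R) i))) (add_zero n) = 0 := by
    intro s
    induction s using Finset.induction_on with
    | empty => simp
    | insert a s ha ih =>
      rw [Finset.sum_insert ha, Ext.mk₀_add, Ext.comp_add, ih, add_zero, ← Ext.mk₀_comp_mk₀,
        ← Ext.comp_assoc_of_second_deg_zero, 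
        Subsingleton.elim (y.comp (Ext.mk₀ (ModuleCat.ofHom (LinearMap.proj a))) (add_zero n)) 0,
        Ext.zero_comp]
  have hid : (∑ i ∈ Finset.univ,
      (ModuleCat.ofHom (LinearMap.proj i) : ModuleCat.of R (Fin k → R) ⟶ ModuleCat.of R R) ≫
      ModuleCat.ofHom (LinearMap.single R (fun _ => R) i)) = 𝟙 _ := by
    ext : 1
    rw [ModuleCat.hom_sum]
    refine LinearMap.ext fun v => ?_
    simp only [LinearMap.sum_apply]
    exact LinearMap.sum_single_apply (fun _ => R) v
  have := key Finset.univ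
  rwa [hid, Ext.comp_mk₀_id] at this

lemma constRank_of [IsNoetherianRing R] {k : ℕ} (N : Submodule R (Fin k → R)) (x : R) (hx : IsSMulRegular R x)
    (hN : ∀ v, x • v ∈ N) : HasConstRank R (ModuleCat.of R N) k := by
  intro p _ hp
  have hxp : x ∈ p.primeCompl := by
    intro hxp
    have h0 : x ∈ ⋃ q ∈ associatedPrimes R R, (q : Set R) := Set.mem_biUnion hp hxp
    rw [biUnion_associatedPrimes_eq_zero_divisors] at h0
    obtain ⟨r, hr, hr0⟩ := h0
    exact hr (hx (by simpa using hr0))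
  let g : (Fin k → R) →ₗ[R] (Fin k → Localization.AtPrime p) :=
    LinearMap.pi fun i => (Algebra.linearMap R _) ∘ₗ LinearMap.proj i
  have hg : IsLocalizedModule p.primeCompl g := inferInstance
  have hf : IsLocalizedModule p.primeCompl (g ∘ₗ N.subtype) := by
    refine ⟨hg.map_units, fun y => ?_, fun {a b} hab => ?_⟩
    · obtain ⟨⟨v, s⟩, hv⟩ := hg.surj y
      refine ⟨⟨⟨x • v, hN v⟩, ⟨x, hxp⟩ * s⟩, ?_⟩
      simp only [LinearMap.comp_apply, Submodule.subtype_apply, map_smul]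
      rw [← hv, mul_smul]; rfl
    · obtain ⟨c, hc⟩ := hg.exists_of_eq hab
      exact ⟨c, Subtype.ext hc⟩
  let e := IsLocalizedModule.iso p.primeCompl (g ∘ₗ N.subtype)
  exact ⟨LinearEquiv.extendScalarsOfIsLocalization p.primeCompl (Localization.AtPrime p) e⟩

lemma regular_of_sub {k : ℕ} (N : Submodule R (Fin k → R)) (x : R) (hx : IsSMulRegular R x) :
    IsSMulRegular N x := by
  intro a b hab
  refine Subtype.ext (funext fun i => hx ?_)
  exact congrFun (congrArg Subtype.val hab) i

/-- dimension shift: `Ext^i(K, Y) = 0` iff `Ext^{i+1}(X, Y) = 0`. -/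
lemma van_syz {k : ℕ} {X : Type} [AddCommGroup X] [Module R X] (f : (Fin k → R) →ₗ[R] X)
    (hf : Function.Surjective f) (Y : ModuleCat.{0} R) (i : ℕ) :
    Subsingleton (Abelian.Ext (ModuleCat.of R (LinearMap.ker f)) Y (i+1)) ↔
    Subsingleton (Abelian.Ext (ModuleCat.of R X) Y (i+2)) := by
  have hS := LinearMap.shortExact_shortComplexKer hf
  have hP : ∀ j, Subsingleton (Abelian.Ext (ModuleCat.of R (Fin k → R)) Y (j+1)) := fun j =>
    Ext.subsingleton_of_projective _ _ _
  exact ⟨fun h => van_contra3 hS Y (i+1) h (hP _), fun h => van_contra1 hS Y (i+1) (hP _) h⟩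

/-- covariant dimension shift. -/
lemma van_syz_cov {k : ℕ} {X : Type} [AddCommGroup X] [Module R X] (f : (Fin k → R) →ₗ[R] X)
    (hf : Function.Surjective f) (Z : ModuleCat.{0} R)
    (hZ : ∀ i, Subsingleton (Abelian.Ext Z (ModuleCat.of R R) (i+1))) (i : ℕ) :
    Subsingleton (Abelian.Ext Z (ModuleCat.of R (LinearMap.ker f)) (i+2)) ↔
    Subsingleton (Abelian.Ext Z (ModuleCat.of R X) (i+1)) := by
  have hS := LinearMap.shortExact_shortComplexKer hf
  have hP := fun j => van_free Z k (j+1) (hZ j)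
  exact ⟨fun h => van_cov3 hS Z (i+1) (hP _) h, fun h => van_cov1 hS Z (i+1) h (hP _)⟩

/-- (SACC) phrased through `Abelian.Ext`. -/
lemma sacc_apply (h : SACC R) (M : ModuleCat.{0} R) [Module.Finite R M]
    (hr : ∃ r, HasConstRank R M r)
    (h1 : ∀ i, Subsingleton (Abelian.Ext M (ModuleCat.of R R) (i+1)))
    (h2 : ∃ N, ∀ i, N ≤ i → Subsingleton (Abelian.Ext M M (i+1))) (i : ℕ) :
    Subsingleton (Abelian.Ext M M (i+1)) := by
  rw [← ext_bridge]
  refine h M inferInstance hr ?_ ?_ (i+1) (Nat.succ_pos i)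
  · rintro (_|j) hj
    · omega
    · exact (ext_bridge _ _ _).2 (h1 j)
  · obtain ⟨N, hN⟩ := h2
    refine ⟨N, ?_⟩
    rintro (_|j) hj
    · omega
    · exact (ext_bridge _ _ _).2 (hN j (by omega))

open scoped Pointwise in
lemma sacc_regular [IsNoetherianRing R] [IsLocalRing R] (h : SACC R) (x : R)
    (hxm : x ∈ IsLocalRing.maximalIdeal R) (hx : IsSMulRegular R x)
    (M : ModuleCat.{0} R) [Module.Finite R M] (hxM : IsSMulRegular M x)
    (h1 : ∀ i, Subsingleton (Abelian.Ext M (ModuleCat.of R R) (i+1)))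
    (h2 : ∃ N, ∀ i, N ≤ i → Subsingleton (Abelian.Ext M M (i+1))) (i : ℕ) :
    Subsingleton (Abelian.Ext M M (i+1)) := by
  have hS := hxM.smulShortComplex_shortExact
  let Q := M ⧸ (x • (⊤ : Submodule R M))
  have hQ : ∀ v : Q, x • v = 0 := by
    intro v
    obtain ⟨m, rfl⟩ := Submodule.mkQ_surjective _ v
    rw [← map_smul, Submodule.mkQ_apply, Submodule.Quotient.mk_eq_zero]
    exact Submodule.smul_mem_pointwise_smul _ _ _ trivial
  obtain ⟨k, f, hf⟩ := Module.Finite.exists_fin' R Q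
  let K := ModuleCat.of R (LinearMap.ker f)
  have hrank : HasConstRank R K k := constRank_of (LinearMap.ker f) x hx fun v => by
    rw [LinearMap.mem_ker, map_smul, hQ]
  have hKR : ∀ i, Subsingleton (Abelian.Ext K (ModuleCat.of R R) (i+1)) := fun i =>
    (van_syz f hf _ i).2 (van_contra3 hS _ (i+1) (h1 i) (h1 (i+1)))
  -- `Ext^{i+2}(K,K) = 0 ↔ Ext^{i+2}(Q,Q) = 0`
  have hKK : ∀ i, Subsingleton (Abelian.Ext K K (i+2)) ↔
      Subsingleton (Abelian.Ext (ModuleCat.of R Q) (ModuleCat.of R Q) (i+2)) := fun i =>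
    (van_syz_cov f hf K hKR i).trans (van_syz f hf _ i)
  obtain ⟨N, hN⟩ := h2
  have hMQ : ∀ i, N ≤ i → Subsingleton (Abelian.Ext M (ModuleCat.of R Q) (i+1)) := fun i hi =>
    van_cov3 hS M (i+1) (hN i hi) (hN (i+1) (by omega))
  have hK := sacc_apply h K ⟨k, hrank⟩ hKR ⟨N+1, fun i hi => by
    obtain ⟨j, rfl⟩ : ∃ j, i = j + 1 := ⟨i-1, by omega⟩
    exact (hKK j).2 (van_contra3 hS _ (j+1) (hMQ j (by omega)) (hMQ (j+1) (by omega)))⟩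
  have hQQ := fun i => (hKK i).1 (hK (i+1))
  have hMQ' : Subsingleton (Abelian.Ext M (ModuleCat.of R Q) (i+1)) := by
    refine subsingleton_of_forall_eq 0 fun y => ?_
    have := hQQ i
    obtain ⟨z, rfl⟩ := Ext.contravariant_sequence_exact₁ hS (ModuleCat.of R Q) y
      (n₁ := i+2) (by omega) (@Subsingleton.elim _ this _ _)
    have h0 : x • 𝟙 (ModuleCat.of R Q) = 0 := by
      refine ModuleCat.hom_ext (LinearMap.ext fun v => ?_)
      exact hQ v
    have h00 : ∀ z : Abelian.Ext M (ModuleCat.of R Q) (i+1),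
        (Ext.mk₀ (x • 𝟙 M)).comp z (zero_add _) = 0 := by
      intro z
      rw [Ext.mk₀_smul, Ext.smul_comp, Ext.mk₀_id_comp, Ext.smul_eq_comp_mk₀, h0, Ext.mk₀_zero,
        Ext.comp_zero]
    exact h00 z
  have hsurj : ∀ y : Abelian.Ext M M (i+1), ∃ z : Abelian.Ext M M (i+1), x • z = y := by
    intro y
    obtain ⟨z, hz⟩ := Ext.covariant_sequence_exact₂ M hS y (@Subsingleton.elim _ hMQ' _ _)
    exact ⟨z, (Ext.smul_eq_comp_mk₀ (X := M) (Y := M) z x).trans hz⟩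
  have htop : (⊤ : Submodule R (Abelian.Ext M M (i+1))) = ⊥ := by
    refine Submodule.eq_bot_of_le_smul_of_le_jacobson_bot (IsLocalRing.maximalIdeal R) ⊤
      Module.Finite.fg_top ?_ (IsLocalRing.maximalIdeal_le_jacobson _)
    rintro y -
    obtain ⟨z, rfl⟩ := hsurj y
    exact Submodule.smul_mem_smul hxm trivial
  exact (Submodule.subsingleton_iff R).1 (subsingleton_of_bot_eq_top htop.symm)

end Aux

/-- A Noetherian local ring of positive depth satisfies (SAC) iff it satisfies (SACC). -/
theorem stmt_5 (R : Type) [CommRing R] [IsNoetherianRing R] [IsLocalRing R]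
    (hdepth : ∃ y ∈ IsLocalRing.maximalIdeal R, IsSMulRegular R y) :
    SAC R ↔ SACC R := by
  refine ⟨fun h M hM _ => h M hM, fun h M hM h1 h2 => ?_⟩
  obtain ⟨x, hxm, hx⟩ := hdepth
  obtain ⟨N, hN⟩ := h2
  obtain ⟨k, f, hf⟩ := Module.Finite.exists_fin' R M
  let K := ModuleCat.of R (LinearMap.ker f)
  have h1' : ∀ i, Subsingleton (Abelian.Ext M (ModuleCat.of R R) (i+1)) := fun i =>
    (ext_bridge _ _ _).1 (h1 (i+1) (Nat.succ_pos i))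
  have hKR : ∀ i, Subsingleton (Abelian.Ext K (ModuleCat.of R R) (i+1)) := fun i =>
    (van_syz f hf _ i).2 (h1' (i+1))
  have hKK : ∀ i, Subsingleton (Abelian.Ext K K (i+1)) ↔ Subsingleton (Abelian.Ext M M (i+1)) :=
    fun i => (van_syz f hf K i).trans (van_syz_cov f hf M h1' i)
  have key := sacc_regular h x hxm hx K (regular_of_sub _ x hx) hKR
    ⟨N, fun i hi => (hKK i).2 ((ext_bridge _ _ _).1 (hN (i+1) (by omega)))⟩
  rintro (_|i) hi
  · omega
  · exact (ext_bridge _ _ _).2 ((hKK i).1 (key i))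
end

section
/- Let R be a Noetherian ring, M a finitely generated R-module with Rfd_R M ≤ 0, and X a finitely generated R-module with Ext_R^i(X, M) = 0 for all i > 0. Then Rfd_R Hom_R(X, M) ≤ 0, i.e., depth_{R_p} Hom_R(X,M)_p ≥ depth R_p for every prime p of R. -/
open CategoryTheory

/-- The depth of a module over a local ring: the infimum of the `i` with
`Ext^i(k, M) ≠ 0`, where `k` is the residue field. -/
noncomputable def moduleDepth (A : Type) [CommRing A] [IsLocalRing A]
    (M : Type) [AddCommGroup M] [Module A M] : ℕ∞ :=
  sInf {n : ℕ∞ | ∃ i : ℕ, n = i ∧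
    ¬ Subsingleton (ExtGroup A (ModuleCat.of A (IsLocalRing.ResidueField A))
      (ModuleCat.of A M) i)}

lemma extGroup_subsingleton_iff_exactAt (A : Type) [CommRing A] {K : ModuleCat.{0} A}
    (P : ProjectiveResolution K) (Y : ModuleCat.{0} A) (i : ℕ) :
    Subsingleton (ExtGroup A K Y i) ↔ (P.complex.linearYonedaObj A Y).ExactAt i := by
  rw [HomologicalComplex.exactAt_iff_isZero_homology, ← (P.isoExt (R := A) i Y).isZero_iff]
  exact ModuleCat.isZero_iff_subsingleton.symm

lemma extGroup_iff_succ (A : Type) [CommRing A] {K : ModuleCat.{0} A}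
    (P : ProjectiveResolution K) (Y : ModuleCat.{0} A) (i : ℕ) :
    Subsingleton (ExtGroup A K Y (i+1)) ↔
      ∀ f : P.complex.X (i+1) ⟶ Y, P.complex.d (i+2) (i+1) ≫ f = 0 →
        ∃ g : P.complex.X i ⟶ Y, P.complex.d (i+1) i ≫ g = f := by
  rw [extGroup_subsingleton_iff_exactAt A P,
    HomologicalComplex.exactAt_iff' _ i (i+1) (i+2) (by simp) (by simp),
    ShortComplex.moduleCat_exact_iff]
  rfl

lemma extGroup_iff_zero (A : Type) [CommRing A] {K : ModuleCat.{0} A}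
    (P : ProjectiveResolution K) (Y : ModuleCat.{0} A) :
    Subsingleton (ExtGroup A K Y 0) ↔
      ∀ f : P.complex.X 0 ⟶ Y, P.complex.d 1 0 ≫ f = 0 → f = 0 := by
  rw [extGroup_subsingleton_iff_exactAt A P,
    HomologicalComplex.exactAt_iff' _ 0 0 1 (by simp) (by simp),
    ShortComplex.moduleCat_exact_iff]
  constructor
  · intro h f hf
    obtain ⟨g, hg⟩ := h f hf
    rw [← hg]
    have : (P.complex.linearYonedaObj A Y).d 0 0 = 0 :=
      HomologicalComplex.shape _ _ _ (by simp)
    exact congr($(this).hom g)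
  · intro h f hf
    exact ⟨0, by rw [map_zero]; exact (h f hf).symm⟩

lemma extGroup_iff_ext (A : Type) [CommRing A] (K Y : ModuleCat.{0} A) (i : ℕ) :
    Subsingleton (ExtGroup A K Y i) ↔ Subsingleton (Abelian.Ext.{0} K Y i) := by
  let P := projectiveResolution K
  cases i with
  | zero =>
    rw [extGroup_iff_zero A P, Abelian.Ext.homEquiv₀.subsingleton_congr]
    let p : P.complex.X 0 ⟶ K := P.π.f 0
    have hp : Epi p := inferInstanceAs (Epi (P.π.f 0))
    have hdp : P.complex.d 1 0 ≫ p = 0 := P.complex_d_comp_π_f_zero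
    constructor
    · intro h
      refine subsingleton_of_forall_eq 0 fun f => ?_
      have := h (p ≫ f) (by rw [← Category.assoc, hdp, Limits.zero_comp])
      rw [← cancel_epi p, this, Limits.comp_zero]
    · intro h f hf
      obtain ⟨g, hg⟩ : ∃ g : K ⟶ Y, p ≫ g = f :=
        ⟨P.exact₀.desc f hf, P.exact₀.g_desc f hf⟩
      rw [← hg, Subsingleton.elim g 0, Limits.comp_zero]
  | succ i =>
    rw [extGroup_iff_succ A P]
    constructor
    · intro h
      refine subsingleton_of_forall_eq 0 fun x => ?_
      obtain ⟨f, hf, rfl⟩ := P.extMk_surjective x (i+2) rfl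
      rw [P.extMk_eq_zero_iff _ _ _ _ i rfl]
      exact h f hf
    · intro h f hf
      exact (P.extMk_eq_zero_iff f _ rfl hf i rfl).1 (Subsingleton.elim _ _)

open Abelian in
lemma ext_shift (A : Type) [CommRing A] (K : ModuleCat.{0} A)
    {S : ShortComplex (ModuleCat.{0} A)} (hS : S.ShortExact) (i : ℕ)
    (h2 : Subsingleton (Ext.{0} K S.X₂ i))
    (h3 : ∀ j, j + 1 = i → Subsingleton (Ext.{0} K S.X₃ j)) :
    Subsingleton (Ext.{0} K S.X₁ i) := by
  refine subsingleton_of_forall_eq 0 fun x => ?_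
  cases i with
  | zero =>
    have := hS.mono_f
    obtain ⟨f, rfl⟩ := Ext.homEquiv₀.symm.surjective x
    have h := (Ext.homEquiv₀.symm.subsingleton_congr.2 h2)
    have : f = 0 := by rw [← cancel_mono S.f]; exact Subsingleton.elim _ _
    rw [this]; simp
  | succ i =>
    obtain ⟨y, rfl⟩ := Ext.covariant_sequence_exact₁ K hS x (Subsingleton.elim _ _) rfl
    have := h3 i rfl
    rw [Subsingleton.elim y 0]; simp

open Abelian in
lemma ext_of_sum (A : Type) [CommRing A] (K N Z : ModuleCat.{0} A) (i n : ℕ)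
    (h : Subsingleton (Ext.{0} K N i)) (ι : Fin n → (N ⟶ Z)) (π : Fin n → (Z ⟶ N))
    (hid : 𝟙 Z = ∑ j, π j ≫ ι j) :
    Subsingleton (Ext.{0} K Z i) := by
  refine subsingleton_of_forall_eq 0 fun x => ?_
  have h1 : ∀ j, x.comp (Ext.mk₀ (π j ≫ ι j)) (add_zero i) = 0 := fun j => by
    rw [← Ext.mk₀_comp_mk₀, ← Ext.comp_assoc_of_second_deg_zero,
      Subsingleton.elim (x.comp (Ext.mk₀ (π j)) (add_zero i)) 0, Ext.zero_comp]
  rw [← Ext.comp_mk₀_id x, hid, Ext.mk₀_sum, Ext.comp_sum]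
  exact Finset.sum_eq_zero fun j _ => h1 j

lemma localizedModule_map_comp {R M N L : Type} [CommRing R] (S : Submonoid R)
    [AddCommGroup M] [Module R M] [AddCommGroup N] [Module R N] [AddCommGroup L] [Module R L]
    (f : M →ₗ[R] N) (g : N →ₗ[R] L) :
    LocalizedModule.map S (g ∘ₗ f) = LocalizedModule.map S g ∘ₗ LocalizedModule.map S f := by
  refine LinearMap.ext fun x => ?_
  induction x using LocalizedModule.induction_on with
  | h m s => simp [LocalizedModule.map_mk]

open Abelian in
lemma ext_localized_hom_free {R M : Type} [CommRing R] (S : Submonoid R)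
    [AddCommGroup M] [Module R M] (n : ℕ) (K : ModuleCat.{0} (Localization S)) (i : ℕ)
    (h : Subsingleton (Ext.{0} K (ModuleCat.of (Localization S) (LocalizedModule S M)) i)) :
    Subsingleton (Ext.{0} K
      (ModuleCat.of (Localization S) (LocalizedModule S ((Fin n → R) →ₗ[R] M))) i) := by
  let π : Fin n → (((Fin n → R) →ₗ[R] M) →ₗ[R] M) := fun j => LinearMap.applyₗ (Pi.single j 1)
  let ι : Fin n → (M →ₗ[R] ((Fin n → R) →ₗ[R] M)) :=
    fun j => LinearMap.lcomp R M (LinearMap.proj j) ∘ₗ (LinearMap.lsmul R M).flip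
  have hid : (LinearMap.id : ((Fin n → R) →ₗ[R] M) →ₗ[R] _) = ∑ j, ι j ∘ₗ π j := by
    ext f j
    simp [ι, π, LinearMap.sum_apply, Pi.single_apply]
  refine ext_of_sum _ _ _ _ i n h (fun j => ModuleCat.ofHom (LocalizedModule.map S (ι j)))
    (fun j => ModuleCat.ofHom (LocalizedModule.map S (π j))) ?_
  ext1
  rw [ModuleCat.hom_sum]
  simp only [ModuleCat.hom_id, ModuleCat.hom_comp, ModuleCat.hom_ofHom,
    ← localizedModule_map_comp, ← map_sum]
  rw [← hid, LocalizedModule.map_id]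

open Abelian in
lemma hom_surj {R X M F : Type} [CommRing R] [AddCommGroup M] [Module R M]
    [AddCommGroup X] [Module R X] [AddCommGroup F] [Module R F]
    (f : F →ₗ[R] X) (hf : Function.Surjective f)
    (h : Subsingleton (Ext.{0} (ModuleCat.of R X) (ModuleCat.of R M) 1)) :
    Function.Surjective (LinearMap.lcomp R M (LinearMap.ker f).subtype) := by
  intro g
  obtain ⟨x, hx⟩ := Ext.contravariant_sequence_exact₁ (LinearMap.shortExact_shortComplexKer hf)
    (ModuleCat.of R M) (Ext.mk₀ (ModuleCat.ofHom g)) (n₁ := 1) rfl (Subsingleton.elim _ _)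
  obtain ⟨y, rfl⟩ := Ext.homEquiv₀.symm.surjective x
  refine ⟨y.hom, ?_⟩
  have hx2 : Ext.mk₀ (ModuleCat.ofHom (LinearMap.ker f).subtype ≫ y) =
      Ext.mk₀ (ModuleCat.ofHom g) := by
    rw [← hx, ← Ext.mk₀_comp_mk₀]; rfl
  have := (Ext.mk₀_bijective _ _).1 hx2
  exact congr(($this).hom)

lemma hom_exact {R X M F : Type} [CommRing R] [AddCommGroup M] [Module R M]
    [AddCommGroup X] [Module R X] [AddCommGroup F] [Module R F]
    (f : F →ₗ[R] X) (hf : Function.Surjective f) :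
    Function.Exact (LinearMap.lcomp R M f) (LinearMap.lcomp R M (LinearMap.ker f).subtype) := by
  intro g
  constructor
  · intro hg
    have hk : LinearMap.ker f ≤ LinearMap.ker g := fun x hx => congr($hg ⟨x, hx⟩)
    refine ⟨(LinearMap.ker f).liftQ g hk ∘ₗ (f.quotKerEquivOfSurjective hf).symm.toLinearMap, ?_⟩
    refine LinearMap.ext fun x => ?_
    have : (f.quotKerEquivOfSurjective hf).symm (f x) = (LinearMap.ker f).mkQ x := by
      rw [LinearEquiv.symm_apply_eq]; rfl
    simp [this]
  · rintro ⟨g, rfl⟩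
    refine LinearMap.ext fun x => ?_
    have := x.2
    rw [LinearMap.mem_ker] at this
    simp [this]

open Abelian in
lemma key {R M : Type} [CommRing R] [IsNoetherianRing R] (S : Submonoid R)
    [AddCommGroup M] [Module R M] (K : ModuleCat.{0} (Localization S)) (i : ℕ) :
    ∀ (X : Type) [AddCommGroup X] [Module R X] [Module.Finite R X],
      (∀ j : ℕ, 0 < j → Subsingleton (Ext.{0} (ModuleCat.of R X) (ModuleCat.of R M) j)) →
      (∀ j ≤ i, Subsingleton
        (Ext.{0} K (ModuleCat.of (Localization S) (LocalizedModule S M)) j)) →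
      Subsingleton (Ext.{0} K
        (ModuleCat.of (Localization S) (LocalizedModule S (X →ₗ[R] M))) i) := by
  induction i using Nat.strong_induction_on with
  | _ i ih =>
    intro X _ _ _ hX hM
    obtain ⟨n, f, hf⟩ := Module.Finite.exists_fin' R X
    have hker : ∀ j : ℕ, 0 < j →
        Subsingleton (Ext.{0} (ModuleCat.of R (LinearMap.ker f)) (ModuleCat.of R M) j) := by
      intro j hj
      refine subsingleton_of_forall_eq 0 fun x => ?_
      have := hX (1 + j) (by omega)
      obtain ⟨y, hy⟩ := Ext.contravariant_sequence_exact₁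
        (LinearMap.shortExact_shortComplexKer hf) (ModuleCat.of R M) x rfl (Subsingleton.elim _ _)
      obtain ⟨j, rfl⟩ : ∃ k, j = k + 1 := ⟨j - 1, by omega⟩
      have : Projective (ModuleCat.of R (Fin n → R)) :=
        (IsProjective.iff_projective _).1 inferInstance
      have hy0 : y = 0 := Ext.eq_zero_of_projective (P := ModuleCat.of R (Fin n → R)) y
      rw [← hy, hy0, Ext.comp_zero]
    let a := LinearMap.lcomp R M f
    let b := LinearMap.lcomp R M (LinearMap.ker f).subtype
    have hab : Function.Exact a b := hom_exact f hf
    have hsurj : Function.Surjective b := hom_surj f hf (hX 1 one_pos)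
    have hinj : Function.Injective a := LinearMap.lcomp_injective_of_surjective f hf
    have hab2 : Function.Exact (LocalizedModule.map S a) (LocalizedModule.map S b) :=
      LocalizedModule.map_exact S a b hab
    let T := ModuleCat.shortComplexOfCompEqZero (LocalizedModule.map S a) (LocalizedModule.map S b)
      hab2.linearMap_comp_eq_zero
    have hT : T.ShortExact := ModuleCat.shortComplex_shortExact T hab2
      (IsLocalizedModule.map_injective S _ _ a hinj)
      (IsLocalizedModule.map_surjective S _ _ b hsurj)
    exact ext_shift _ K hT i (ext_localized_hom_free S n K i (hM i le_rfl))
      fun j hj => ih j (by omega) _ hker fun k hk => hM k (by omega)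

/-- If `M` is finitely generated with `Rfd_R M ≤ 0` (i.e. `depth M_p ≥ depth R_p` for
every prime `p`) and `X` is finitely generated with `Ext_R^{>0}(X,M) = 0`, then
`Rfd_R Hom_R(X,M) ≤ 0`, i.e. `depth Hom_R(X,M)_p ≥ depth R_p` for every prime `p`. -/
theorem stmt_9 (R : Type) [CommRing R] [IsNoetherianRing R]
    (M : Type) [AddCommGroup M] [Module R M] [Module.Finite R M]
    (X : Type) [AddCommGroup X] [Module R X] [Module.Finite R X]
    (hdepth : ∀ (p : Ideal R) [p.IsPrime],
      moduleDepth (Localization.AtPrime p) (Localization.AtPrime p) ≤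
        moduleDepth (Localization.AtPrime p) (LocalizedModule p.primeCompl M))
    (hext : ∀ i : ℕ, 0 < i →
      Subsingleton (ExtGroup R (ModuleCat.of R X) (ModuleCat.of R M) i)) :
    ∀ (p : Ideal R) [p.IsPrime],
      moduleDepth (Localization.AtPrime p) (Localization.AtPrime p) ≤
        moduleDepth (Localization.AtPrime p) (LocalizedModule p.primeCompl (X →ₗ[R] M)) := by
  intro p hp
  refine le_sInf ?_
  rintro _ ⟨i, rfl, hi⟩
  by_contra hlt
  rw [not_le] at hlt
  apply hi
  rw [extGroup_iff_ext]
  refine key p.primeCompl _ i X (fun j hj => (extGroup_iff_ext _ _ _ _).1 (hext j hj)) ?_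
  intro j hj
  refine (extGroup_iff_ext _ _ _ _).1 ?_
  by_contra hns
  have h1 : moduleDepth (Localization.AtPrime p) (LocalizedModule p.primeCompl M) ≤ (j : ℕ∞) :=
    sInf_le ⟨j, rfl, hns⟩
  have h2 : (j : ℕ∞) ≤ i := by exact_mod_cast hj
  exact absurd ((hdepth p).trans (h1.trans h2)) (not_le.2 hlt)
end

section
/- Let R → S be a local homomorphism of Noetherian local rings with the flat dimension of S as an R-module finite. If S satisfies (SAC), then R satisfies (SAC). -/
open CategoryTheory

/-- `FlatDimLE R n M`: `M` admits a resolution of length at most `n` by flat `R`-modules. -/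
inductive FlatDimLE (R : Type) [CommRing R] : ℕ → ModuleCat.{0} R → Prop
  | zero (M : ModuleCat.{0} R) (h : Module.Flat R M) : FlatDimLE R 0 M
  | succ {n : ℕ} {K F M : ModuleCat.{0} R} (hflat : Module.Flat R F)
      (f : K →ₗ[R] F) (g : F →ₗ[R] M)
      (hf : Function.Injective f) (hg : Function.Surjective g)
      (hfg : LinearMap.range f = LinearMap.ker g)
      (hK : FlatDimLE R n K) : FlatDimLE R (n + 1) M


open TensorProduct Function

section Elementary
variable {R : Type} [CommRing R]

theorem sac_desc {K P M N : Type} [AddCommGroup K] [Module R K] [AddCommGroup P] [Module R P]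
    [AddCommGroup M] [Module R M] [AddCommGroup N] [Module R N]
    {i : K →ₗ[R] P} {e : P →ₗ[R] M} (hex : Exact i e) (he : Surjective e)
    (f : P →ₗ[R] N) (hf : f ∘ₗ i = 0) : ∃ g : M →ₗ[R] N, g ∘ₗ e = f := by
  have hk : LinearMap.ker e ≤ LinearMap.ker f := by
    intro x hx
    obtain ⟨y, rfl⟩ := (hex x).1 hx
    exact LinearMap.congr_fun hf y
  refine ⟨(LinearMap.ker e).liftQ f hk ∘ₗ (e.quotKerEquivOfSurjective he).symm.toLinearMap, ?_⟩
  ext x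
  have : (e.quotKerEquivOfSurjective he).symm (e x) = (LinearMap.ker e).mkQ x := by
    rw [LinearEquiv.symm_apply_eq]; rfl
  simp [this]

theorem sac_lift {K P M N : Type} [AddCommGroup K] [Module R K] [AddCommGroup P] [Module R P]
    [AddCommGroup M] [Module R M] [AddCommGroup N] [Module R N]
    {i : K →ₗ[R] P} {e : P →ₗ[R] M} (hex : Exact i e) (hi : Injective i)
    (f : N →ₗ[R] P) (hf : e ∘ₗ f = 0) : ∃ g : N →ₗ[R] K, i ∘ₗ g = f := by
  have hk : ∀ x, f x ∈ LinearMap.range i := by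
    intro x
    exact (hex (f x)).1 (LinearMap.congr_fun hf x)
  refine ⟨(LinearEquiv.ofInjective i hi).symm.toLinearMap ∘ₗ f.codRestrict _ hk, ?_⟩
  ext x
  have := (LinearEquiv.ofInjective i hi).apply_symm_apply (f.codRestrict _ hk x)
  exact congrArg Subtype.val this

/-- every map `K → N` extends along `i : K → P`. -/
def SacExtd {K P : Type} [AddCommGroup K] [Module R K] [AddCommGroup P] [Module R P]
    (i : K →ₗ[R] P) (N : Type) [AddCommGroup N] [Module R N] : Prop :=
  ∀ f : K →ₗ[R] N, ∃ g : P →ₗ[R] N, g ∘ₗ i = f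

theorem SacExtd.congr {K P : Type} [AddCommGroup K] [Module R K] [AddCommGroup P] [Module R P]
    {i : K →ₗ[R] P} {N N' : Type} [AddCommGroup N] [Module R N] [AddCommGroup N'] [Module R N']
    (h : SacExtd i N) (e : N ≃ₗ[R] N') : SacExtd i N' := by
  intro f
  obtain ⟨g, hg⟩ := h (e.symm.toLinearMap ∘ₗ f)
  refine ⟨e.toLinearMap ∘ₗ g, ?_⟩
  rw [LinearMap.comp_assoc, hg]
  ext x; simp

theorem SacExtd.pi {K P : Type} [AddCommGroup K] [Module R K] [AddCommGroup P] [Module R P]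
    {i : K →ₗ[R] P} {N : Type} [AddCommGroup N] [Module R N] 
    (h : SacExtd i N) (J : Type) : SacExtd i (J → N) := by
  intro f
  choose g hg using fun j => h (LinearMap.proj j ∘ₗ f)
  refine ⟨LinearMap.pi g, ?_⟩
  ext x j
  exact LinearMap.congr_fun (hg j) x

theorem sac_shift {X2 F1 X1 F0 Y1 G Y0 : Type}
    [AddCommGroup X2] [Module R X2] [AddCommGroup F1] [Module R F1]
    [AddCommGroup X1] [Module R X1] [AddCommGroup F0] [Module R F0]
    [AddCommGroup Y1] [Module R Y1] [AddCommGroup G] [Module R G]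
    [AddCommGroup Y0] [Module R Y0]
    {i1 : X2 →ₗ[R] F1} {e1 : F1 →ₗ[R] X1} {i0 : X1 →ₗ[R] F0}
    {k : Y1 →ₗ[R] G} {p : G →ₗ[R] Y0}
    [Module.Projective R F1] [Module.Projective R F0]
    (hex1 : Exact i1 e1) (he1 : Surjective e1)
    (hk : Injective k) (hex : Exact k p) (hp : Surjective p)
    (h1 : SacExtd i1 G) (h0 : SacExtd i0 G) :
    SacExtd i0 Y0 ↔ SacExtd i1 Y1 := by
  have hpk : ∀ y, p (k y) = 0 := fun y => hex.apply_apply_eq_zero y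
  have hei : ∀ y, e1 (i1 y) = 0 := fun y => hex1.apply_apply_eq_zero y
  constructor
  · intro h f
    obtain ⟨g, hg⟩ := h1 (k ∘ₗ f)
    obtain ⟨q, hq⟩ := sac_desc hex1 he1 (p ∘ₗ g) (by
      rw [LinearMap.comp_assoc, hg]; ext x; simp [hpk])
    obtain ⟨q', hq'⟩ := h q
    obtain ⟨r, hr⟩ := Module.projective_lifting_property p q' hp
    obtain ⟨s, hs⟩ := sac_lift hex hk (g - r ∘ₗ i0 ∘ₗ e1) (by
      ext x
      have a1 := LinearMap.congr_fun hr (i0 (e1 x))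
      have a2 := LinearMap.congr_fun hq' (e1 x)
      have a3 := LinearMap.congr_fun hq x
      simp only [LinearMap.comp_apply] at a1 a2 a3
      simp [a1, a2, a3])
    refine ⟨s, ?_⟩
    ext x
    apply hk
    have a1 := LinearMap.congr_fun hs (i1 x)
    have a2 := LinearMap.congr_fun hg x
    simp only [LinearMap.comp_apply] at a1 a2
    simp [a1, a2, hei]
  · intro h f
    obtain ⟨g, hg⟩ := Module.projective_lifting_property p (f ∘ₗ e1) hp
    obtain ⟨q, hq⟩ := sac_lift hex hk (g ∘ₗ i1) (by
      rw [← LinearMap.comp_assoc, hg]; ext x; simp [hei])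
    obtain ⟨q', hq'⟩ := h q
    obtain ⟨s, hs⟩ := sac_desc hex1 he1 (g - k ∘ₗ q') (by
      ext x
      have a1 := LinearMap.congr_fun hq x
      have a2 := LinearMap.congr_fun hq' x
      simp only [LinearMap.comp_apply] at a1 a2
      simp [a1, a2])
    obtain ⟨r, hr⟩ := h0 s
    refine ⟨p ∘ₗ r, ?_⟩
    ext x
    obtain ⟨y, rfl⟩ := he1 x
    have a1 := LinearMap.congr_fun hr (e1 y)
    have a2 := LinearMap.congr_fun hs y
    have a3 := LinearMap.congr_fun hg y
    simp only [LinearMap.comp_apply] at a1 a2 a3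
    simp [a1, a2, a3, hpk]

/-- A sequence of syzygies `0 → X (k+1) → F k → X k → 0`. -/
structure SacSyz (R : Type) [CommRing R] (F : ℕ → ModuleCat.{0} R) where
  X : ℕ → ModuleCat.{0} R
  i : ∀ k, X (k + 1) →ₗ[R] F k
  e : ∀ k, F k →ₗ[R] X k
  inj : ∀ k, Injective (i k)
  surj : ∀ k, Surjective (e k)
  exact : ∀ k, Exact (i k) (e k)

/-- flat resolution data -/
theorem sac_flat {n : ℕ} {T : ModuleCat.{0} R} (h : FlatDimLE R n T) :
    ∃ (G : ℕ → ModuleCat.{0} R) (Z : SacSyz R G), Nonempty (Z.X 0 ≃ₗ[R] T) ∧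
      (∀ k, Module.Flat R (G k)) ∧ (∀ m, n ≤ m → Module.Flat R (Z.X m)) := by
  induction h with
  | zero M hM =>
    refine ⟨fun k => Nat.casesOn k M (fun _ => ModuleCat.of R PUnit), 
      ⟨fun k => Nat.casesOn k M (fun _ => ModuleCat.of R PUnit), fun k => 0,
        fun k => LinearMap.id, ?_, ?_, ?_⟩, ⟨LinearEquiv.refl _ _⟩, ?_, ?_⟩
    · intro k x y _; exact Subsingleton.elim (α := PUnit) x y
    · intro k x; exact ⟨x, rfl⟩
    · intro k x; simp [eq_comm]
    · rintro (_ | k)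
      · exact hM
      · exact inferInstanceAs (Module.Flat R PUnit)
    · rintro (_ | k) _
      · exact hM
      · exact inferInstanceAs (Module.Flat R PUnit)
  | @succ n K F M hF f g hf hg hfg hK ih =>
    obtain ⟨G, Z, ⟨e⟩, hG, hZ⟩ := ih
    have hex : Exact f g := by rw [LinearMap.exact_iff]; exact hfg.symm
    refine ⟨fun k => Nat.casesOn k F G, ⟨fun k => Nat.casesOn k M Z.X, 
      fun k => match k with
        | 0 => f ∘ₗ e.toLinearMap
        | k + 1 => Z.i k, 
      fun k => match k with
        | 0 => g
        | k + 1 => Z.e k, ?_, ?_, ?_⟩, ⟨LinearEquiv.refl _ _⟩, ?_, ?_⟩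
    · rintro (_ | k)
      · exact hf.comp e.injective
      · exact Z.inj k
    · rintro (_ | k)
      · exact hg
      · exact Z.surj k
    · rintro (_ | k)
      · intro x
        constructor
        · intro hx
          obtain ⟨y, rfl⟩ := (hex x).1 hx
          exact ⟨e.symm y, by simp⟩
        · rintro ⟨y, rfl⟩
          exact hex.apply_apply_eq_zero (e y)
      · exact Z.exact k
    · rintro (_ | k)
      · exact hF
      · exact hG k
    · rintro (_ | k) hk
      · omega
      · exact hZ k (by omega)

/-- `Tor`-independence with respect to a flat resolution, from step `m` on -/
def SacTor {G : ℕ → ModuleCat.{0} R} (Z : SacSyz R G) (m : ℕ)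
    (N : Type) [AddCommGroup N] [Module R N] : Prop :=
  ∀ l, m ≤ l → Injective ((Z.i l).rTensor N)

variable {A C B : Type} [AddCommGroup A] [Module R A] [AddCommGroup B] [Module R B]
  [AddCommGroup C] [Module R C]

theorem SacTor.inj {G : ℕ → ModuleCat.{0} R} {Z : SacSyz R G} (hG : ∀ k, Module.Flat R (G k))
    {m : ℕ} {a : A →ₗ[R] C} {b : C →ₗ[R] B} (ha : Injective a)
    (hab : Exact a b) (hb : Surjective b) (hB : SacTor Z m B) (l : ℕ) (hl : m ≤ l) :
    Injective (a.lTensor (Z.X l)) := by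
  have := hG l
  exact lTensor_injective_of_exact_of_exact_of_rTensor_injective (Z.exact l) (Z.surj l)
    hab hb (hB l hl) (Module.Flat.lTensor_preserves_injective_linearMap a ha)

theorem SacTor.step {G : ℕ → ModuleCat.{0} R} {Z : SacSyz R G} (hG : ∀ k, Module.Flat R (G k))
    {m : ℕ} {a : A →ₗ[R] C} {b : C →ₗ[R] B} (ha : Injective a)
    (hab : Exact a b) (hb : Surjective b) (hB : SacTor Z (m + 1) B) (hC : SacTor Z 0 C) :
    SacTor Z m A := by
  intro l hl
  have h1 := hB.inj hG ha hab hb (l + 1) (by omega)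
  have h2 := (hC l (Nat.zero_le _)).comp h1
  have h3 : (Z.i l).rTensor C ∘ₗ a.lTensor (Z.X (l + 1))
      = a.lTensor (G l) ∘ₗ (Z.i l).rTensor A := by
    rw [LinearMap.rTensor_comp_lTensor, LinearMap.lTensor_comp_rTensor]
  rw [← LinearMap.coe_comp, h3, LinearMap.coe_comp] at h2
  exact h2.of_comp

theorem SacTor.top {G : ℕ → ModuleCat.{0} R} {Z : SacSyz R G} (hG : ∀ k, Module.Flat R (G k))
    {n : ℕ} (hZ : ∀ m, n ≤ m → Module.Flat R (Z.X m)) : SacTor Z n A := by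
  intro l hl
  have := hZ l hl
  have := hG l
  have hs : Surjective (Finsupp.linearCombination R (id : A → A)) :=
    Finsupp.linearCombination_id_surjective R A
  rw [← LinearMap.lTensor_inj_iff_rTensor_inj]
  exact lTensor_injective_of_exact_of_exact_of_rTensor_injective
    (LinearMap.exact_subtype_ker_map (Finsupp.linearCombination R (id : A → A))) hs
    (Z.exact l) (Z.surj l)
    (Module.Flat.rTensor_preserves_injective_linearMap _ (Submodule.injective_subtype _))
    (Module.Flat.lTensor_preserves_injective_linearMap _ (Z.inj l))

theorem SacTor.of_flat {G : ℕ → ModuleCat.{0} R} (Z : SacSyz R G) [Module.Flat R A] :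
    SacTor Z 0 A := by
  intro l hl
  exact Module.Flat.rTensor_preserves_injective_linearMap _ (Z.inj l)

theorem SacTor.congr {G : ℕ → ModuleCat.{0} R} {Z : SacSyz R G} {m : ℕ} (h : SacTor Z m A)
    (e : A ≃ₗ[R] B) : SacTor Z m B := by
  intro l hl
  have h3 : (Z.i l).rTensor B 
      = (e.lTensor (G l)).toLinearMap ∘ₗ (Z.i l).rTensor A ∘ₗ
        (e.symm.lTensor (Z.X (l+1))).toLinearMap := by
    ext; simp
  rw [h3, LinearMap.coe_comp, LinearMap.coe_comp]
  exact (LinearEquiv.injective _).comp ((h l hl).comp (LinearEquiv.injective _))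

theorem SacTor.pi {G : ℕ → ModuleCat.{0} R} {Z : SacSyz R G} {m : ℕ} (h : SacTor Z m A)
    (J : Type) [Finite J] : SacTor Z m (J → A) := by
  classical
  have := Fintype.ofFinite J
  intro l hl
  have h3 : (TensorProduct.piRight R R (G l) (fun _ : J => A)).toLinearMap ∘ₗ 
      (Z.i l).rTensor (J → A) = (LinearMap.pi fun j => (Z.i l).rTensor A ∘ₗ LinearMap.proj j) ∘ₗ
      (TensorProduct.piRight R R (Z.X (l+1)) (fun _ : J => A)).toLinearMap := by
    ext; simp
  have h4 : Injective ((LinearMap.pi fun j : J => (Z.i l).rTensor A ∘ₗ LinearMap.proj j) ∘ₗ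
      (TensorProduct.piRight R R (Z.X (l+1)) (fun _ : J => A)).toLinearMap) := by
    rw [LinearMap.coe_comp]
    refine Injective.comp ?_ (LinearEquiv.injective _)
    intro x y hxy
    funext j
    exact h l hl (congrFun hxy j)
  rw [← h3, LinearMap.coe_comp] at h4
  exact h4.of_comp

end Elementary

section BaseChange
variable {R S : Type} [CommRing R] [CommRing S] [Algebra R S]

theorem sac_syz_tor {G F : ℕ → ModuleCat.{0} R} {Z : SacSyz R G}
    (hG : ∀ k, Module.Flat R (G k)) {n : ℕ} (hZ : ∀ m, n ≤ m → Module.Flat R (Z.X m))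
    (Y : SacSyz R F) (hF : ∀ k, Module.Flat R (F k)) (j : ℕ) : 
    ∀ m, n ≤ m + j → SacTor Z m (Y.X j) := by
  induction j with
  | zero => intro m hm l hl; exact SacTor.top hG hZ l (by omega)
  | succ j ih =>
    intro m hm
    have := hF j
    exact (ih (m + 1) (by omega)).step hG (Y.inj j) (Y.exact j) (Y.surj j) (SacTor.of_flat Z)

/-- comparison map -/
noncomputable def sacGamma (S : Type) [CommRing S] [Algebra R S] 
    (Y N : Type) [AddCommGroup Y] [Module R Y] [AddCommGroup N] [Module R N] :
    S ⊗[R] (Y →ₗ[R] N) →ₗ[S] (S ⊗[R] Y →ₗ[S] S ⊗[R] N) :=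
  (LinearMap.baseChangeHom R S Y N).liftBaseChange S

theorem sacGamma_natural {Y Y' N : Type} [AddCommGroup Y] [Module R Y] 
    [AddCommGroup Y'] [Module R Y'] [AddCommGroup N] [Module R N] (u : Y →ₗ[R] Y')
    (x : S ⊗[R] (Y' →ₗ[R] N)) :
    sacGamma S Y N ((u.lcomp R N).lTensor S x) = sacGamma S Y' N x ∘ₗ u.baseChange S := by
  induction x with
  | zero => simp
  | add x y hx hy => simp [hx, hy, LinearMap.add_comp]
  | tmul s f =>
    ext y
    simp [sacGamma]

theorem sacGamma_free (J : Type) [Finite J] (N : Type) [AddCommGroup N] [Module R N] :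
    Bijective (sacGamma (R := R) S (J → R) N) := by
  have h := Module.isBaseChange_map_of_finite_free (R := R) N S J
  have : ⇑(sacGamma S (J → R) N) = h.equiv := by
    have : sacGamma S (J → R) N = h.equiv.toLinearMap := by
      ext s f
      simp [sacGamma, IsBaseChange.equiv_tmul]
    rw [this]; rfl
  rw [this]
  exact h.equiv.bijective

variable {b : ℕ → ℕ} (Y : SacSyz R (fun k => ModuleCat.of R (Fin (b k) → R)))
  {G : ℕ → ModuleCat.{0} R} {Z : SacSyz R G}
  (hG : ∀ k, Module.Flat R (G k)) {n : ℕ} (hZ : ∀ m, n ≤ m → Module.Flat R (Z.X m))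
  (ez : Z.X 0 ≃ₗ[R] S)
  {N : Type} [AddCommGroup N] [Module R N] (hN : SacTor Z 0 N)

theorem sac_lcomp_exact (j : ℕ) :
    Exact ((Y.e j).lcomp R N) ((Y.i j).lcomp R N) := by
  exact LinearMap.exact_lcomp_of_exact_of_surjective _ (Y.exact j) (Y.surj j)

theorem sac_lcomp_inj (j : ℕ) : Injective ((Y.e j).lcomp R N) :=
  LinearMap.lcomp_injective_of_surjective _ (Y.surj j)

include hG hZ hN in
theorem sac_hom_tor {t : ℕ} (hE : ∀ j, t ≤ j → SacExtd (Y.i j) N) (k : ℕ) :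
    ∀ j m, t ≤ j → n ≤ m + k → SacTor Z m (Y.X j →ₗ[R] N) := by
  induction k with
  | zero => intro j m _ hm l hl; exact SacTor.top hG hZ l (by omega)
  | succ k ih =>
    intro j m hj hm
    refine (ih (j + 1) (m + 1) (by omega) (by omega)).step hG (sac_lcomp_inj Y j)
      (sac_lcomp_exact Y j) (fun f => hE j hj f) ?_
    have h := hN.pi (Fin (b j))
    exact h.congr ((LinearMap.lsum R (fun _ : Fin (b j) ↦ R) R).symm ≪≫ₗ
       LinearEquiv.piCongrRight (fun _ ↦ LinearMap.ringLmapEquivSelf R R N)).symm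

include hG hZ hN ez in
theorem sac_lTensor_inj {t : ℕ} (hE : ∀ j, t ≤ j → SacExtd (Y.i j) N) (j : ℕ) (hj : t ≤ j) :
    Injective (((Y.e j).lcomp R N).lTensor S) := by
  have h := (sac_hom_tor Y hG hZ hN hE n (j + 1) 0 (by omega) (by omega)).inj hG 
    (sac_lcomp_inj Y j) (sac_lcomp_exact Y j) (fun f => hE j hj f) 0 le_rfl
  have h3 : ((Y.e j).lcomp R N).lTensor S ∘ₗ (ez.rTensor _).toLinearMap = 
      (ez.rTensor _).toLinearMap ∘ₗ ((Y.e j).lcomp R N).lTensor (Z.X 0) := by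
    ext; simp
  have h4 : Injective ((ez.rTensor _).toLinearMap ∘ₗ ((Y.e j).lcomp R N).lTensor (Z.X 0)) := by
    rw [LinearMap.coe_comp]
    exact (LinearEquiv.injective _).comp h
  rw [← h3, LinearMap.coe_comp] at h4
  exact Injective.of_comp_right h4 (LinearEquiv.surjective _)

include hG hZ hN ez in
theorem sac_gamma_inj {t : ℕ} (hE : ∀ j, t ≤ j → SacExtd (Y.i j) N) (j : ℕ) (hj : t ≤ j) :
    Injective (sacGamma (R := R) S (Y.X j) N) := by
  rw [injective_iff_map_eq_zero]
  intro x hx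
  have h1 := sac_lTensor_inj Y hG hZ ez hN hE j hj
  have h2 := sacGamma_natural (S := S) (N := N) (Y.e j) x
  rw [hx, LinearMap.zero_comp] at h2
  have h3 := (sacGamma_free (R := R) (S := S) (Fin (b j)) N).1 (h2.trans (map_zero _).symm)
  exact h1 (h3.trans (map_zero _).symm)

include hG hZ hN ez in
theorem sac_gamma_surj {t : ℕ} (hE : ∀ j, t ≤ j → SacExtd (Y.i j) N) (j : ℕ) (hj : t ≤ j) :
    Surjective (sacGamma (R := R) S (Y.X j) N) := by
  intro φ
  obtain ⟨c, hc⟩ := (sacGamma_free (R := R) (S := S) (Fin (b j)) N).2 (φ ∘ₗ (Y.e j).baseChange S)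
  have h1 : ((Y.i j).lcomp R N).lTensor S c = 0 := by
    apply sac_gamma_inj Y hG hZ ez hN hE (j + 1) (by omega)
    rw [map_zero, sacGamma_natural]
    erw [hc]
    rw [LinearMap.comp_assoc, ← LinearMap.baseChange_comp, (Y.exact j).linearMap_comp_eq_zero]
    simp
  obtain ⟨a, rfl⟩ := (lTensor_exact S (sac_lcomp_exact Y j (N := N)) (fun f => hE j hj f) c).1 h1
  refine ⟨a, ?_⟩
  have h2 := (sacGamma_natural (S := S) (N := N) (Y.e j) a).symm.trans hc
  ext y
  obtain ⟨y, rfl⟩ := Y.surj j y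
  simpa using LinearMap.congr_fun h2 (1 ⊗ₜ y)

include hG hZ hN ez in
theorem sac_ascent {t : ℕ} (hE : ∀ j, t ≤ j → SacExtd (Y.i j) N) (j : ℕ) (hj : t ≤ j) :
    SacExtd ((Y.i j).baseChange S) (S ⊗[R] N) := by
  intro φ
  obtain ⟨a, rfl⟩ := sac_gamma_surj Y hG hZ ez hN hE (j + 1) (by omega) φ
  obtain ⟨c, rfl⟩ := LinearMap.lTensor_surjective S (g := (Y.i j).lcomp R N) (fun f => hE j hj f) a
  exact ⟨_, (sacGamma_natural (S := S) (N := N) (Y.i j) c).symm⟩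

theorem sac_nakayama [IsLocalRing R] [IsLocalRing S] [IsLocalHom (algebraMap R S)]
    {E : Type} [AddCommGroup E] [Module R E] [Module.Finite R E] 
    (h : Subsingleton (S ⊗[R] E)) : Subsingleton E := by
  rw [← IsLocalRing.subsingleton_tensorProduct (R := R)]
  let k := IsLocalRing.ResidueField R
  let l := IsLocalRing.ResidueField S
  rw [← Module.FaithfullyFlat.subsingleton_tensorProduct_iff_right k l]
  have e1 : l ⊗[k] (k ⊗[R] E) ≃ₗ[R] l ⊗[R] E := 
    (TensorProduct.AlgebraTensorModule.cancelBaseChange R k k l E).restrictScalars R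
  have e2 : l ⊗[S] (S ⊗[R] E) ≃ₗ[S] l ⊗[R] E := 
    (TensorProduct.AlgebraTensorModule.cancelBaseChange R S S l E)
  have : Subsingleton (l ⊗[R] E) := e2.symm.toEquiv.subsingleton
  exact e1.toEquiv.subsingleton

include hG hZ hN ez in
theorem sac_descent [IsNoetherianRing R] [IsLocalRing R] [IsLocalRing S] 
    [IsLocalHom (algebraMap R S)] [Module.Finite R N]
    {t : ℕ} (hY : Module.Finite R (Y.X (t + 1)))
    (hE : ∀ j, t + 1 ≤ j → SacExtd (Y.i j) N)
    (hS : SacExtd ((Y.i t).baseChange S) (S ⊗[R] N)) :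
    SacExtd (Y.i t) N := by
  have hsurj : Surjective (((Y.i t).lcomp R N).lTensor S) := by
    intro a
    obtain ⟨φ, hφ⟩ := hS (sacGamma (R := R) S (Y.X (t + 1)) N a)
    obtain ⟨c, rfl⟩ := (sacGamma_free (R := R) (S := S) (Fin (b t)) N).2 φ
    refine ⟨c, ?_⟩
    apply sac_gamma_inj Y hG hZ ez hN hE (t + 1) le_rfl
    rw [sacGamma_natural]
    exact hφ
  suffices h : Surjective ((Y.i t).lcomp R N) from fun f => h f
  rw [← LinearMap.range_eq_top, ← Submodule.Quotient.subsingleton_iff]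
  have : Module.Finite R (Y.X (t + 1) →ₗ[R] N) := inferInstance
  apply sac_nakayama (R := R) (S := S)
  have hex := lTensor_exact S (f := (Y.i t).lcomp R N) 
    (g := (LinearMap.range ((Y.i t).lcomp R N)).mkQ) 
    (by rw [LinearMap.exact_iff]; simp) (Submodule.mkQ_surjective _)
  refine subsingleton_of_forall_eq 0 fun x => ?_
  obtain ⟨y, rfl⟩ := LinearMap.lTensor_surjective S 
    (Submodule.mkQ_surjective (LinearMap.range ((Y.i t).lcomp R N))) x
  exact (hex y).2 (hsurj y)

end BaseChange

section ExtComp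
open CategoryTheory Limits
variable {R : Type} [CommRing R] {F : ℕ → ModuleCat.{0} R} (Y : SacSyz R F)

/-- differential -/
def SacSyz.d (k : ℕ) : F (k + 1) ⟶ F k := ModuleCat.ofHom (Y.i k ∘ₗ Y.e (k + 1))

theorem SacSyz.ei (k : ℕ) (x : Y.X (k + 1)) : Y.e k (Y.i k x) = 0 :=
  (Y.exact k).apply_apply_eq_zero x

theorem SacSyz.d_d (k : ℕ) : Y.d (k + 1) ≫ Y.d k = 0 := by
  ext x
  simp [SacSyz.d, Y.ei]

theorem SacSyz.d_exact (k : ℕ) (x : F (k + 1)) (hx : Y.d k x = 0) : ∃ y, Y.d (k + 1) y = x := by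
  have h1 : Y.e (k + 1) x = 0 := Y.inj k (by simpa [SacSyz.d] using hx)
  obtain ⟨z, rfl⟩ := (Y.exact (k + 1) x).1 h1
  obtain ⟨w, rfl⟩ := Y.surj _ z
  exact ⟨w, rfl⟩

/-- the complex -/
noncomputable def SacSyz.cx : ChainComplex (ModuleCat.{0} R) ℕ :=
  ChainComplex.of F Y.d Y.d_d

theorem SacSyz.cx_d (k : ℕ) : Y.cx.d (k + 1) k = Y.d k := ChainComplex.of_d _ _ _

/-- the resolution -/
noncomputable def SacSyz.res (hF : ∀ k, Module.Projective R (F k)) :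
    ProjectiveResolution (Y.X 0) where
  complex := Y.cx
  projective k := by
    have := hF k
    exact (IsProjective.iff_projective (R := R) (F k)).1 this
  π := (ChainComplex.toSingle₀Equiv _ _).symm ⟨ModuleCat.ofHom (Y.e 0), by
    rw [SacSyz.cx_d]
    ext x
    exact Y.ei 0 _⟩
  quasiIso := ⟨fun n => by
    cases n
    · rw [ChainComplex.quasiIsoAt₀_iff, ShortComplex.quasiIso_iff_of_zeros']
      · refine (ShortComplex.exact_and_epi_g_iff_of_iso (S₂ := ShortComplex.mk (Y.d 0) 
          (ModuleCat.ofHom (Y.e 0)) (by ext x; exact Y.ei 0 _)) ?_).2 ⟨?_, ?_⟩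
        · exact ShortComplex.isoMk (Iso.refl _) (Iso.refl _) (Iso.refl _)
            (by simp [SacSyz.cx_d]; rfl) (by simp; rfl)
        · rw [ShortComplex.moduleCat_exact_iff]
          intro x hx
          obtain ⟨z, rfl⟩ := (Y.exact 0 x).1 hx
          obtain ⟨w, rfl⟩ := Y.surj _ z
          exact ⟨w, rfl⟩
        · exact (ModuleCat.epi_iff_surjective _).2 (Y.surj 0)
      all_goals rfl
    · rename_i n
      rw [quasiIsoAt_iff_exactAt']
      · rw [HomologicalComplex.exactAt_iff' _ (n + 1 + 1) (n + 1) n (by simp) (by simp)]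
        rw [ShortComplex.moduleCat_exact_iff]
        intro x hx
        change Y.cx.d (n + 1) n x = 0 at hx
        rw [SacSyz.cx_d] at hx
        obtain ⟨y, hy⟩ := Y.d_exact n x hx
        refine ⟨y, ?_⟩
        change Y.cx.d (n + 1 + 1) (n + 1) y = x
        rw [SacSyz.cx_d]; exact hy
      · apply ChainComplex.exactAt_succ_single_obj⟩

theorem SacSyz.ext_iff (hF : ∀ k, Module.Projective R (F k)) (N : ModuleCat.{0} R) (k : ℕ) :
    Subsingleton (ExtGroup R (Y.X 0) N (k + 1)) ↔ SacExtd (Y.i k) N := by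
  have h1 := ((Y.res hF).isoExt (R := R) (k + 1) N)
  rw [h1.toLinearEquiv.toEquiv.subsingleton_congr, ← ModuleCat.isZero_iff_subsingleton, 
    ← HomologicalComplex.exactAt_iff_isZero_homology,
    HomologicalComplex.exactAt_iff' _ k (k + 1) (k + 1 + 1) (by simp) (by simp),
    ShortComplex.moduleCat_exact_iff]
  change (∀ f : F (k + 1) ⟶ N, Y.cx.d (k + 1 + 1) (k + 1) ≫ f = 0 → 
    ∃ g : F k ⟶ N, Y.cx.d (k + 1) k ≫ g = f) ↔ _
  rw [SacSyz.cx_d, SacSyz.cx_d]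
  constructor
  · intro h f
    obtain ⟨g, hg⟩ := h (ModuleCat.ofHom (f ∘ₗ Y.e (k + 1))) (by 
      ext x; exact (congrArg f (Y.ei _ _)).trans (map_zero f))
    refine ⟨g.hom, ?_⟩
    ext x
    obtain ⟨x, rfl⟩ := Y.surj _ x
    exact congrArg (fun q => q.hom x) hg
  · intro h f hf
    obtain ⟨f', hf'⟩ := sac_desc (Y.exact (k + 1)) (Y.surj (k + 1)) f.hom (by
      ext x
      obtain ⟨x, rfl⟩ := Y.surj _ x
      exact congrArg (fun q => q.hom x) hf)
    obtain ⟨g, hg⟩ := h f'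
    refine ⟨ModuleCat.ofHom g, ?_⟩
    ext x
    have a1 := LinearMap.congr_fun hg (Y.e (k + 1) x)
    have a2 := LinearMap.congr_fun hf' x
    exact a1.trans a2

end ExtComp

section Final
variable {R : Type} [CommRing R]

/-- shift -/
def SacSyz.shift {F : ℕ → ModuleCat.{0} R} (Y : SacSyz R F) (n : ℕ) :
    SacSyz R (fun k => F (n + k)) where
  X k := Y.X (n + k)
  i k := Y.i (n + k)
  e k := Y.e (n + k)
  inj k := Y.inj _
  surj k := Y.surj _
  exact k := Y.exact _

theorem sac_exists [IsNoetherianRing R] (M : ModuleCat.{0} R) (hM : Module.Finite R M) :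
    ∃ (b : ℕ → ℕ) (Y : SacSyz R (fun k => ModuleCat.of R (Fin (b k) → R))), Y.X 0 = M ∧
      ∀ k, Module.Finite R (Y.X k) := by
  have key : ∀ X : {X : ModuleCat.{0} R // Module.Finite R X}, 
      ∃ (n : ℕ) (p : (Fin n → R) →ₗ[R] X.1), Surjective p := fun X => by
    have := X.2
    exact Module.Finite.exists_fin' R X.1
  choose n p hp using key
  let s : {X : ModuleCat.{0} R // Module.Finite R X} → {X : ModuleCat.{0} R // Module.Finite R X} :=
    fun X => ⟨ModuleCat.of R (LinearMap.ker (p X)), 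
      inferInstanceAs (Module.Finite R (LinearMap.ker (p X)))⟩
  let W : ℕ → {X : ModuleCat.{0} R // Module.Finite R X} := fun k =>
    Nat.rec ⟨M, hM⟩ (fun _ X => s X) k
  refine ⟨fun k => n (W k), ⟨fun k => (W k).1, fun k => (LinearMap.ker (p (W k))).subtype, 
    fun k => p (W k), fun k => Submodule.injective_subtype _, fun k => hp _, 
    fun k => LinearMap.exact_subtype_ker_map _⟩, rfl, fun k => (W k).2⟩

theorem SacSyz.shift_iff {b : ℕ → ℕ} (Y : SacSyz R (fun k => ModuleCat.of R (Fin (b k) → R)))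
    (hR : ∀ j, SacExtd (Y.i j) R) (j : ℕ) (n : ℕ) :
    SacExtd (Y.i j) (Y.X 0) ↔ SacExtd (Y.i (n + j)) (Y.X n) := by
  induction n with
  | zero => rw [Nat.zero_add]
  | succ n ih =>
    rw [ih, show n + 1 + j = n + j + 1 by omega]
    exact sac_shift (Y.exact _) (Y.surj _) (Y.inj n) (Y.exact n) (Y.surj n)
      ((hR _).pi _) ((hR _).pi _)

/-- base change of a syzygy sequence -/
noncomputable def SacSyz.bc (S : Type) [CommRing S] [Algebra R S] {F : ℕ → ModuleCat.{0} R}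
    (Y : SacSyz R F) (h : ∀ k, Injective ((Y.i k).baseChange S)) :
    SacSyz S (fun k => ModuleCat.of S (S ⊗[R] F k)) where
  X k := ModuleCat.of S (S ⊗[R] Y.X k)
  i k := (Y.i k).baseChange S
  e k := (Y.e k).baseChange S
  inj := h
  surj k := LinearMap.lTensor_surjective S (Y.surj k)
  exact k := lTensor_exact S (Y.exact k) (Y.surj k)

end Final

theorem stmt_13 (R S : Type) [CommRing R] [CommRing S]
    [IsNoetherianRing R] [IsNoetherianRing S] [IsLocalRing R] [IsLocalRing S]
    [Algebra R S] (hloc : IsLocalHom (algebraMap R S))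
    (hfd : ∃ n : ℕ, FlatDimLE R n (ModuleCat.of R S))
    (hS : SAC S) : SAC R := by
  intro M hM hMR hMM
  obtain ⟨n, hn⟩ := hfd
  obtain ⟨G, Z, ⟨ez⟩, hG, hZ⟩ := sac_flat hn
  obtain ⟨b, Y, rfl, hfin⟩ := sac_exists M hM
  have hF : ∀ k, Module.Projective R (ModuleCat.of R (Fin (b k) → R)) := fun k =>
    inferInstanceAs (Module.Projective R (Fin (b k) → R))
  have hFf : ∀ k, Module.Flat R (ModuleCat.of R (Fin (b k) → R)) := fun k =>
    inferInstanceAs (Module.Flat R (Fin (b k) → R))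
  have hR : ∀ j, SacExtd (Y.i j) R := fun j => 
    (Y.ext_iff hF (ModuleCat.of R R) j).1 (hMR (j + 1) (by omega))
  obtain ⟨t, ht⟩ := hMM
  have hX : ∀ j, t ≤ j → SacExtd (Y.i j) (Y.X 0) := fun j hj => 
    (Y.ext_iff hF (Y.X 0) j).1 (ht (j + 1) (by omega))
  -- pass to the `n`-th syzygy
  let W : SacSyz R (fun k => ModuleCat.of R (Fin (b (n + k)) → R)) := Y.shift n
  have hWR : ∀ j, 0 ≤ j → SacExtd (W.i j) R := fun j _ => hR (n + j)
  have hW : ∀ j, t ≤ j → SacExtd (W.i j) (W.X 0) := fun j hj => (Y.shift_iff hR j n).1 (hX j hj)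
  have htor : ∀ j, SacTor Z 0 (W.X j) := fun j => 
    sac_syz_tor hG hZ Y hFf (n + j) 0 (by omega)
  have hinj : ∀ k, Injective ((W.i k).baseChange S) := by
    intro k
    have h := (htor k).inj hG (W.inj k) (W.exact k) (W.surj k) 0 le_rfl
    have h3 : (W.i k).lTensor S ∘ₗ (ez.rTensor _).toLinearMap = 
        (ez.rTensor _).toLinearMap ∘ₗ (W.i k).lTensor (Z.X 0) := by
      ext; simp
    have h4 : Injective ((ez.rTensor _).toLinearMap ∘ₗ (W.i k).lTensor (Z.X 0)) := by
      rw [LinearMap.coe_comp]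
      exact (LinearEquiv.injective _).comp h
    rw [← h3, LinearMap.coe_comp] at h4
    exact Injective.of_comp_right h4 (LinearEquiv.surjective _)
  let V := W.bc S hinj
  have hV : ∀ k, Module.Projective S (ModuleCat.of S (S ⊗[R] (ModuleCat.of R (Fin (b (n + k)) → R)))) :=
    fun k => inferInstanceAs (Module.Projective S (S ⊗[R] (Fin (b (n + k)) → R)))
  have hfinW : ∀ k, Module.Finite R (W.X k) := fun k => hfin (n + k)
  have hVfin : Module.Finite S (V.X 0) := inferInstanceAs (Module.Finite S (S ⊗[R] W.X 0))
  have hres := hS (V.X 0) hVfin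
    (by
      rintro (_ | i) hi
      · omega
      rw [V.ext_iff hV]
      exact (sac_ascent W hG hZ ez (SacTor.of_flat Z) hWR i (Nat.zero_le i)).congr
        (TensorProduct.AlgebraTensorModule.rid R S S))
    ⟨t, by
      rintro (_ | i) hi
      · omega
      rw [V.ext_iff hV]
      exact sac_ascent W hG hZ ez (htor 0) hW i (by omega)⟩
  have hVS : ∀ j, SacExtd ((W.i j).baseChange S) (S ⊗[R] W.X 0) := fun j =>
    (V.ext_iff hV (V.X 0) j).1 (hres (j + 1) (by omega))
  have hfinal : ∀ s j, t ≤ j + s → SacExtd (W.i j) (W.X 0) := by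
    intro s
    induction s with
    | zero => exact hW
    | succ s ih =>
      intro j hj
      exact sac_descent W hG hZ ez (htor 0) (hfinW (j + 1)) (fun k hk => ih k (by omega)) (hVS j)
  rintro (_ | i) hi
  · omega
  rw [Y.ext_iff hF]
  exact (Y.shift_iff hR i n).2 (hfinal t i (by omega))
end

section
/- Let R → S be a local homomorphism of Noetherian local rings with fd_R S < ∞. If S satisfies the Auslander–Reiten condition (ARC), then R satisfies (ARC). -/
open CategoryTheory

/-- The Auslander–Reiten condition (ARC) for a local ring: every finitely generated
module `M` with `Ext^{>0}(M, M ⊕ R) = 0` is free. -/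
def ARC (R : Type) [CommRing R] : Prop :=
  ∀ M : ModuleCat.{0} R, Module.Finite R M →
    (∀ i : ℕ, 0 < i → Subsingleton (ExtGroup R M (ModuleCat.of R R) i)) →
    (∀ i : ℕ, 0 < i → Subsingleton (ExtGroup R M M i)) →
    Module.Free R M

namespace ARCaux

/-- Vanishing of a homotopical Ext group, unbundled. -/
def EZ (A : Type) [CommRing A] (M X : Type) [AddCommGroup M] [Module A M] [AddCommGroup X]
    [Module A X] (i : ℕ) : Prop :=
  Subsingleton (Abelian.Ext (ModuleCat.of A M) (ModuleCat.of A X) i)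

lemma ext_iff_of_res (A : Type) [CommRing A] (M N : ModuleCat.{0} A)
    (P : ProjectiveResolution M) (i : ℕ) :
    Subsingleton (Abelian.Ext M N (i + 1)) ↔
      ∀ f : P.complex.X (i + 1) ⟶ N, P.complex.d (i + 2) (i + 1) ≫ f = 0 →
        ∃ g : P.complex.X i ⟶ N, P.complex.d (i + 1) i ≫ g = f := by
  constructor
  · intro h f hf
    rw [← P.extMk_eq_zero_iff f (i + 2) rfl hf i rfl]
    exact Subsingleton.elim _ _
  · intro h
    refine subsingleton_of_forall_eq 0 fun α => ?_
    obtain ⟨f, hf, rfl⟩ := P.extMk_surjective α (i + 2) rfl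
    rw [P.extMk_eq_zero_iff f (i + 2) rfl hf i rfl]
    exact h f hf

lemma extGroup_iff_of_res (A : Type) [CommRing A] (M N : ModuleCat.{0} A)
    (P : ProjectiveResolution M) (i : ℕ) :
    Subsingleton (ExtGroup A M N (i + 1)) ↔
      ∀ f : P.complex.X (i + 1) ⟶ N, P.complex.d (i + 2) (i + 1) ≫ f = 0 →
        ∃ g : P.complex.X i ⟶ N, P.complex.d (i + 1) i ≫ g = f := by
  have e := (P.isoExt (R := A) (i + 1) N).toLinearEquiv.toEquiv
  rw [ExtGroup, e.subsingleton_congr, ← ModuleCat.isZero_iff_subsingleton]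
  rw [← HomologicalComplex.exactAt_iff_isZero_homology,
    HomologicalComplex.exactAt_iff' _ i (i + 1) (i + 2) (by simp) (by simp),
    ShortComplex.moduleCat_exact_iff]
  rfl

lemma extGroup_iff (A : Type) [CommRing A] (M N : ModuleCat.{0} A) (i : ℕ) :
    Subsingleton (ExtGroup A M N (i + 1)) ↔ EZ A M N (i + 1) := by
  have P := projectiveResolution M
  rw [extGroup_iff_of_res A M N P i, EZ, ← ext_iff_of_res A M N P i]

section
variable {A : Type} [CommRing A] {K P M X Y : Type} [AddCommGroup M] [Module A M]
  [AddCommGroup X] [Module A X] [AddCommGroup K] [Module A K] [AddCommGroup P] [Module A P]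
  [AddCommGroup Y] [Module A Y]

lemma ses {f : K →ₗ[A] P} {g : P →ₗ[A] M} (hf : Function.Injective f)
    (hg : Function.Surjective g) (h : Function.Exact f g) :
    ∃ w, (ShortComplex.mk (ModuleCat.ofHom f) (ModuleCat.ofHom g) w).ShortExact := by
  refine ⟨?_, ?_⟩
  · ext x; exact h.apply_apply_eq_zero x
  · refine @ShortComplex.ShortExact.mk _ _ _ _ ?_ ?_ ?_
    · rw [ShortComplex.ShortExact.moduleCat_exact_iff_function_exact]; exact h
    · exact (ModuleCat.mono_iff_injective _).2 hf
    · exact (ModuleCat.epi_iff_surjective _).2 hg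

lemma EZ.left {f : K →ₗ[A] P} {g : P →ₗ[A] M} (hf : Function.Injective f)
    (hg : Function.Surjective g) (h : Function.Exact f g) {i : ℕ}
    (h3 : EZ A M Y (i + 1)) (h2 : EZ A P Y i) : EZ A K Y i := by
  obtain ⟨w, hS⟩ := ses hf hg h
  refine subsingleton_of_forall_eq 0 fun α => ?_
  obtain ⟨x, rfl⟩ := Abelian.Ext.contravariant_sequence_exact₁ hS _ α (add_comm 1 i)
    (h3.elim _ _)
  rw [h2.elim x 0]; simp

lemma EZ.right {f : K →ₗ[A] P} {g : P →ₗ[A] M} (hf : Function.Injective f)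
    (hg : Function.Surjective g) (h : Function.Exact f g) {i : ℕ}
    (h1 : EZ A K Y i) (h2 : EZ A P Y (i + 1)) : EZ A M Y (i + 1) := by
  obtain ⟨w, hS⟩ := ses hf hg h
  refine subsingleton_of_forall_eq 0 fun α => ?_
  obtain ⟨x, rfl⟩ := Abelian.Ext.contravariant_sequence_exact₃ hS _ α
    (h2.elim _ _) (add_comm 1 i)
  rw [h1.elim x 0]; simp

lemma EZ.mid {f : K →ₗ[A] P} {g : P →ₗ[A] M} (hf : Function.Injective f)
    (hg : Function.Surjective g) (h : Function.Exact f g) {i : ℕ}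
    (h1 : EZ A K Y i) (h3 : EZ A M Y i) : EZ A P Y i := by
  obtain ⟨w, hS⟩ := ses hf hg h
  refine subsingleton_of_forall_eq 0 fun α => ?_
  obtain ⟨x, rfl⟩ := Abelian.Ext.contravariant_sequence_exact₂ hS _ α
    (h1.elim _ _)
  rw [h3.elim x 0]; simp

lemma EZ.coleft {f : K →ₗ[A] P} {g : P →ₗ[A] M} (hf : Function.Injective f)
    (hg : Function.Surjective g) (h : Function.Exact f g) {i : ℕ}
    (h3 : EZ A Y M i) (h2 : EZ A Y P (i + 1)) : EZ A Y K (i + 1) := by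
  obtain ⟨w, hS⟩ := ses hf hg h
  refine subsingleton_of_forall_eq 0 fun α => ?_
  obtain ⟨x, rfl⟩ := Abelian.Ext.covariant_sequence_exact₁ _ hS α
    (h2.elim _ _) rfl
  rw [h3.elim x 0]; simp

lemma EZ.comid {f : K →ₗ[A] P} {g : P →ₗ[A] M} (hf : Function.Injective f)
    (hg : Function.Surjective g) (h : Function.Exact f g) {i : ℕ}
    (h1 : EZ A Y K i) (h3 : EZ A Y M i) : EZ A Y P i := by
  obtain ⟨w, hS⟩ := ses hf hg h
  refine subsingleton_of_forall_eq 0 fun α => ?_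
  obtain ⟨x, rfl⟩ := Abelian.Ext.covariant_sequence_exact₂ _ hS α
    (h3.elim _ _)
  rw [h1.elim x 0]; simp

lemma EZ.extend {f : K →ₗ[A] P} {g : P →ₗ[A] M} (hf : Function.Injective f)
    (hg : Function.Surjective g) (h : Function.Exact f g) 
    (h3 : EZ A M Y 1) (φ : K →ₗ[A] Y) : ∃ ψ : P →ₗ[A] Y, ψ ∘ₗ f = φ := by
  obtain ⟨w, hS⟩ := ses hf hg h
  obtain ⟨x, hx⟩ := Abelian.Ext.contravariant_sequence_exact₁ hS _
    (Abelian.Ext.mk₀ (ModuleCat.ofHom φ)) (add_comm 1 0) (h3.elim _ _)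
  obtain ⟨x, rfl⟩ := (Abelian.Ext.mk₀_bijective _ _).2 x
  rw [Abelian.Ext.mk₀_comp_mk₀] at hx
  have := (Abelian.Ext.mk₀_bijective _ _).1 hx
  refine ⟨x.hom, ?_⟩
  exact congrArg ModuleCat.Hom.hom this

lemma EZ.proj [Module.Projective A P] (i : ℕ) : EZ A P Y (i + 1) := by
  have : Projective (ModuleCat.of A P) := (IsProjective.iff_projective P).1 inferInstance
  exact Abelian.Ext.subsingleton_of_projective _ _ _

lemma EZ.inj [Module.Injective A P] (i : ℕ) : EZ A Y P (i + 1) := by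
  have : Injective (ModuleCat.of A P) := Module.injective_object_of_injective_module A P
  exact Abelian.Ext.subsingleton_of_injective _ _ _

lemma EZ.one_of_extend {f : K →ₗ[A] P} {g : P →ₗ[A] M} (hf : Function.Injective f)
    (hg : Function.Surjective g) (h : Function.Exact f g) [Module.Projective A P]
    (H : ∀ φ : K →ₗ[A] Y, ∃ ψ : P →ₗ[A] Y, ψ ∘ₗ f = φ) : EZ A M Y 1 := by
  obtain ⟨w, hS⟩ := ses hf hg h
  refine subsingleton_of_forall_eq 0 fun α => ?_
  obtain ⟨x, rfl⟩ := Abelian.Ext.contravariant_sequence_exact₃ hS _ α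
    ((EZ.proj (A := A) (P := P) (Y := Y) 0).elim _ _) (add_comm 1 0)
  obtain ⟨x, rfl⟩ := (Abelian.Ext.mk₀_bijective _ _).2 x
  obtain ⟨ψ, hψ⟩ := H x.hom
  have : x = (ModuleCat.ofHom f) ≫ ModuleCat.ofHom ψ := by
    ext a; exact (LinearMap.congr_fun hψ a).symm
  rw [this, ← Abelian.Ext.mk₀_comp_mk₀, ← Abelian.Ext.comp_assoc _ _ _ (add_zero 1) (zero_add 0) (by simp)]
  have := hS.extClass_comp
  dsimp only at this
  rw [this]; simp

lemma exact_zero_equiv (e : K ≃ₗ[A] P) :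
    Function.Exact (e : K →ₗ[A] P) (0 : P →ₗ[A] PUnit.{1}) := by
  intro y
  simp

lemma EZ.congr_left (e : K ≃ₗ[A] P) {i : ℕ} (h : EZ A K Y (i + 1)) : EZ A P Y (i + 1) :=
  EZ.mid (f := (e : K →ₗ[A] P)) (g := (0 : P →ₗ[A] PUnit.{1})) e.injective
    (fun _ => ⟨0, rfl⟩) (exact_zero_equiv e) h (EZ.proj i)

lemma EZ.congr_right (e : K ≃ₗ[A] P) {i : ℕ} (h : EZ A Y K (i + 1)) : EZ A Y P (i + 1) := by
  have : Module.Injective A PUnit.{1} := ⟨fun _ _ _ _ _ _ _ _ _ => ⟨0, fun _ => rfl⟩⟩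
  exact EZ.comid (f := (e : K →ₗ[A] P)) (g := (0 : P →ₗ[A] PUnit.{1})) e.injective
    (fun _ => ⟨0, rfl⟩) (exact_zero_equiv e) h (EZ.inj i)

lemma EZ.pi {i : ℕ} (h : EZ A X Y (i + 1)) (k : ℕ) : EZ A (Fin k → X) Y (i + 1) := by
  induction k with
  | zero => exact EZ.proj i
  | succ k ih =>
    have h' : EZ A (X × (Fin k → X)) Y (i + 1) :=
      EZ.mid (f := LinearMap.inl A X (Fin k → X)) (g := LinearMap.snd A X (Fin k → X))
        LinearMap.inl_injective LinearMap.snd_surjective Function.Exact.inl_snd h ih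
    exact EZ.congr_left (Fin.consLinearEquiv A (fun _ => X)) h'

lemma EZ.copi {i : ℕ} (h : EZ A Y X (i + 1)) (k : ℕ) : EZ A Y (Fin k → X) (i + 1) := by
  induction k with
  | zero =>
    have : Module.Injective A (Fin 0 → X) := ⟨fun _ _ _ _ _ _ _ _ _ => ⟨0, fun _ => Subsingleton.elim _ _⟩⟩
    exact EZ.inj i
  | succ k ih =>
    have h' : EZ A Y (X × (Fin k → X)) (i + 1) :=
      EZ.comid (f := LinearMap.inl A X (Fin k → X)) (g := LinearMap.snd A X (Fin k → X))
        LinearMap.inl_injective LinearMap.snd_surjective Function.Exact.inl_snd h ih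
    exact EZ.congr_right (Fin.consLinearEquiv A (fun _ => X)) h'

end

section
open TensorProduct
variable {R : Type} [CommRing R]

lemma dual_exact {K F M : Type} [AddCommGroup K] [AddCommGroup F] [AddCommGroup M]
    [Module R K] [Module R F] [Module R M] (f : K →ₗ[R] F) (g : F →ₗ[R] M)
    (hg : Function.Surjective g) (h : LinearMap.range f = LinearMap.ker g) :
    Function.Exact (CharacterModule.dual g) (CharacterModule.dual f) := by
  intro c
  constructor
  · intro hc
    have hk : g.toAddMonoidHom.ker ≤ AddMonoidHom.ker (show F →+ AddCircle (1 : ℚ) from c) := by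
      intro x hx
      have hx' : x ∈ LinearMap.ker g := hx
      rw [← h] at hx'
      obtain ⟨y, rfl⟩ := hx'
      exact DFunLike.congr_fun hc y
    refine ⟨AddMonoidHom.liftOfSurjective g.toAddMonoidHom hg ⟨c, hk⟩, ?_⟩
    ext x
    exact AddMonoidHom.liftOfRightInverse_comp_apply g.toAddMonoidHom _ (Function.rightInverse_surjInv hg) ⟨c, hk⟩ x
  · rintro ⟨d, rfl⟩
    ext x
    have hx : g (f x) = 0 := by
      have : f x ∈ LinearMap.ker g := h ▸ LinearMap.mem_range_self f x
      exact this
    change d (g (f x)) = 0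
    rw [hx]; exact map_zero d

lemma fd_bound {n : ℕ} {M : ModuleCat.{0} R} (h : FlatDimLE R n M) :
    ∀ (N : Type) [AddCommGroup N] [Module R N] (i : ℕ), n ≤ i →
      EZ R N (CharacterModule M) (i + 1) := by
  induction h with
  | zero M h =>
    intro N _ _ i _
    have := Module.Flat.iff_characterModule_injective.1 h
    exact EZ.inj i
  | succ hflat f g hf hg hfg hK ih =>
    intro N _ _ i hi
    obtain ⟨j, rfl⟩ : ∃ j, i = j + 1 := ⟨i - 1, by omega⟩
    have := Module.Flat.iff_characterModule_injective.1 hflat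
    exact EZ.coleft (f := CharacterModule.dual g) (g := CharacterModule.dual f)
      (CharacterModule.dual_injective_of_surjective _ hg)
      (CharacterModule.dual_surjective_of_injective _ hf)
      (dual_exact f g hg hfg) (ih N j (by omega)) (EZ.inj _)

lemma lTensor_inj {S K P M : Type} [AddCommGroup S] [Module R S]
    [AddCommGroup M] [Module R M] [AddCommGroup K] [Module R K] [AddCommGroup P] [Module R P]
    {f : K →ₗ[R] P} {g : P →ₗ[R] M} (hf : Function.Injective f)
    (hg : Function.Surjective g) (h : Function.Exact f g)
    (h3 : EZ R M (CharacterModule S) 1) : Function.Injective (f.lTensor S) := by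
  rw [LinearMap.lTensor_inj_iff_rTensor_inj, rTensor_injective_iff_lcomp_surjective]
  intro φ
  exact EZ.extend hf hg h h3 φ

/-- finite presentation step -/
lemma exists_pres [IsNoetherianRing R] (N : Type) [AddCommGroup N] [Module R N]
    [Module.Finite R N] : ∃ (k : ℕ) (g : (Fin k → R) →ₗ[R] N), Function.Surjective g :=
  Module.Finite.exists_fin' R N

lemma exact_ker {N P : Type} [AddCommGroup N] [Module R N] [AddCommGroup P] [Module R P]
    (g : P →ₗ[R] N) : Function.Exact (LinearMap.ker g).subtype g :=
  LinearMap.exact_subtype_ker_map g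

variable {S : Type} [CommRing S] [Algebra R S] {X : Type} [AddCommGroup X] [Module R X]

lemma hom_ez [IsNoetherianRing R] {n : ℕ}
    (hb : ∀ (N : Type) [AddCommGroup N] [Module R N] (i : ℕ), n ≤ i →
      EZ R N (CharacterModule S) (i + 1))
    (hX : ∀ i, EZ R X (CharacterModule S) (i + 1)) (d : ℕ) :
    ∀ (N : Type) [AddCommGroup N] [Module R N] [Module.Finite R N],
      (∀ i, EZ R N X (i + 1)) → ∀ i, n ≤ i + d →
      EZ R (N →ₗ[R] X) (CharacterModule S) (i + 1) := by
  induction d with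
  | zero => intro N _ _ _ _ i hi; exact hb _ i hi
  | succ d ih =>
    intro N _ _ _ hN i hi
    obtain ⟨k, g, hg⟩ := exists_pres (R := R) N
    have hK : ∀ i, EZ R (LinearMap.ker g) X (i + 1) := fun i =>
      EZ.left (Submodule.injective_subtype _) hg (exact_ker g) (hN (i + 1)) (EZ.proj i)
    refine EZ.left (f := LinearMap.lcomp R X g) (g := LinearMap.lcomp R X (LinearMap.ker g).subtype)
      (LinearMap.lcomp_injective_of_surjective g hg)
      (fun φ => EZ.extend (Submodule.injective_subtype _) hg (exact_ker g) (hN 0) φ)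
      (LinearMap.exact_lcomp_of_exact_of_surjective _ (exact_ker g) hg)
      (ih _ hK (i + 1) (by omega)) ?_
    exact EZ.congr_left ((Pi.basisFun R (Fin k)).constr R) (EZ.pi (hX i) k)

variable (R S X) in
/-- comparison map -/
noncomputable abbrev cmp (N : Type) [AddCommGroup N] [Module R N] :
    S ⊗[R] (N →ₗ[R] X) →ₗ[R] (N →ₗ[R] S ⊗[R] X) :=
  TensorProduct.lTensorHomToHomLTensor (.id R) N S X

lemma cmp_nat {N P : Type} [AddCommGroup N] [Module R N] [AddCommGroup P] [Module R P]
    (g : P →ₗ[R] N) (z : S ⊗[R] (N →ₗ[R] X)) :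
    cmp R S X P ((LinearMap.lcomp R X g).lTensor S z) = (cmp R S X N z) ∘ₗ g := by
  induction z with
  | zero => simp
  | tmul s φ => ext p; simp
  | add x y hx hy => rw [map_add, map_add, hx, hy, map_add, LinearMap.add_comp]

lemma cmp_free (k : ℕ) : Function.Bijective (cmp R S X (Fin k → R)) := by
  have := (lTensorHomEquivHomLTensor R (Fin k → R) S X).bijective
  rwa [← LinearEquiv.coe_coe, lTensorHomEquivHomLTensor_toLinearMap] at this

lemma cmp_inj [IsNoetherianRing R] {n : ℕ}
    (hb : ∀ (N : Type) [AddCommGroup N] [Module R N] (i : ℕ), n ≤ i →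
      EZ R N (CharacterModule S) (i + 1))
    (hX : ∀ i, EZ R X (CharacterModule S) (i + 1))
    (N : Type) [AddCommGroup N] [Module R N] [Module.Finite R N]
    (hN : ∀ i, EZ R N X (i + 1)) : Function.Injective (cmp R S X N) := by
  obtain ⟨k, g, hg⟩ := exists_pres (R := R) N
  have hK : ∀ i, EZ R (LinearMap.ker g) X (i + 1) := fun i =>
    EZ.left (Submodule.injective_subtype _) hg (exact_ker g) (hN (i + 1)) (EZ.proj i)
  have h1 : Function.Injective ((LinearMap.lcomp R X g).lTensor S) :=
    lTensor_inj (g := LinearMap.lcomp R X (LinearMap.ker g).subtype)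
      (LinearMap.lcomp_injective_of_surjective g hg)
      (fun φ => EZ.extend (Submodule.injective_subtype _) hg (exact_ker g) (hN 0) φ)
      (LinearMap.exact_lcomp_of_exact_of_surjective _ (exact_ker g) hg)
      (hom_ez hb hX n _ hK 0 (by omega))
  intro x y hxy
  apply h1
  apply (cmp_free k).1
  rw [cmp_nat, cmp_nat, hxy]

lemma cmp_surj [IsNoetherianRing R] {n : ℕ}
    (hb : ∀ (N : Type) [AddCommGroup N] [Module R N] (i : ℕ), n ≤ i →
      EZ R N (CharacterModule S) (i + 1))
    (hX : ∀ i, EZ R X (CharacterModule S) (i + 1))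
    (N : Type) [AddCommGroup N] [Module R N] [Module.Finite R N]
    (hN : ∀ i, EZ R N X (i + 1)) : Function.Surjective (cmp R S X N) := by
  intro α
  obtain ⟨k, g, hg⟩ := exists_pres (R := R) N
  have hK : ∀ i, EZ R (LinearMap.ker g) X (i + 1) := fun i =>
    EZ.left (Submodule.injective_subtype _) hg (exact_ker g) (hN (i + 1)) (EZ.proj i)
  have h2 : Function.Exact ((LinearMap.lcomp R X g).lTensor S)
      ((LinearMap.lcomp R X (LinearMap.ker g).subtype).lTensor S) :=
    lTensor_exact S (LinearMap.exact_lcomp_of_exact_of_surjective _ (exact_ker g) hg)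
      (fun φ => EZ.extend (Submodule.injective_subtype _) hg (exact_ker g) (hN 0) φ)
  obtain ⟨β, hβ⟩ := (cmp_free (S := S) (X := X) k).2 (α ∘ₗ g)
  have h3 : (LinearMap.lcomp R X (LinearMap.ker g).subtype).lTensor S β = 0 := by
    apply cmp_inj hb hX _ hK
    rw [cmp_nat, hβ, map_zero]
    ext x
    simp
  obtain ⟨γ, rfl⟩ := (h2 β).1 h3
  refine ⟨γ, ?_⟩
  rw [cmp_nat] at hβ
  ext x
  obtain ⟨y, rfl⟩ := hg x
  exact LinearMap.congr_fun hβ y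

lemma ext_baseChange [IsNoetherianRing R] {n : ℕ}
    (hb : ∀ (N : Type) [AddCommGroup N] [Module R N] (i : ℕ), n ≤ i →
      EZ R N (CharacterModule S) (i + 1))
    (hX : ∀ i, EZ R X (CharacterModule S) (i + 1)) (i : ℕ) :
    ∀ (N : Type) [AddCommGroup N] [Module R N] [Module.Finite R N],
    (∀ i, EZ R N X (i + 1)) → (∀ i, EZ R N (CharacterModule S) (i + 1)) →
    EZ S (S ⊗[R] N) (S ⊗[R] X) (i + 1) := by
  induction i with
  | zero =>
    intro N _ _ _ hN hT
    obtain ⟨k, g, hg⟩ := exists_pres (R := R) N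
    have hK : ∀ i, EZ R (LinearMap.ker g) X (i + 1) := fun i =>
      EZ.left (Submodule.injective_subtype _) hg (exact_ker g) (hN (i + 1)) (EZ.proj i)
    refine EZ.one_of_extend (f := (LinearMap.ker g).subtype.baseChange S)
      (g := g.baseChange S)
      (lTensor_inj (S := S) (Submodule.injective_subtype _) hg (exact_ker g) (hT 0))
      (LinearMap.lTensor_surjective S hg)
      (lTensor_exact S (exact_ker g) hg) ?_
    intro φ
    obtain ⟨β, hβ⟩ := cmp_surj hb hX _ hK
      ((φ.restrictScalars R) ∘ₗ (TensorProduct.mk R S (LinearMap.ker g) 1))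
    obtain ⟨β', rfl⟩ := LinearMap.lTensor_surjective S
      (g := LinearMap.lcomp R X (LinearMap.ker g).subtype)
      (fun φ => EZ.extend (Submodule.injective_subtype _) hg (exact_ker g) (hN 0) φ) β
    rw [cmp_nat] at hβ
    refine ⟨LinearMap.liftBaseChange S (cmp R S X _ β'), ?_⟩
    ext x
    have := LinearMap.congr_fun hβ x
    simpa using this
  | succ i ih =>
    intro N _ _ _ hN hT
    obtain ⟨k, g, hg⟩ := exists_pres (R := R) N
    have hK : ∀ i, EZ R (LinearMap.ker g) X (i + 1) := fun i =>
      EZ.left (Submodule.injective_subtype _) hg (exact_ker g) (hN (i + 1)) (EZ.proj i)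
    have hKT : ∀ i, EZ R (LinearMap.ker g) (CharacterModule S) (i + 1) := fun i =>
      EZ.left (Submodule.injective_subtype _) hg (exact_ker g) (hT (i + 1)) (EZ.proj i)
    exact EZ.right (f := (LinearMap.ker g).subtype.baseChange S)
      (g := g.baseChange S)
      (lTensor_inj (S := S) (Submodule.injective_subtype _) hg (exact_ker g) (hT 0))
      (LinearMap.lTensor_surjective S hg)
      (lTensor_exact S (exact_ker g) hg) (ih _ hK hKT) (EZ.proj _)

end

section
open TensorProduct
variable {R : Type} [CommRing R] {S : Type} [CommRing S] [Algebra R S]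

lemma subsingleton_of_baseChange [IsLocalRing R] [IsLocalRing S] [IsLocalHom (algebraMap R S)]
    (K : Type) [AddCommGroup K] [Module R K] [Module.Finite R K]
    (h : Subsingleton (S ⊗[R] K)) : Subsingleton K := by
  let k := IsLocalRing.ResidueField R
  let l := IsLocalRing.ResidueField S
  have h1 : Subsingleton (l ⊗[R] K) :=
    (AlgebraTensorModule.cancelBaseChange R S l l K).symm.toEquiv.subsingleton
  have h2 : Subsingleton (l ⊗[k] (k ⊗[R] K)) :=
    (AlgebraTensorModule.cancelBaseChange R k l l K).toEquiv.subsingleton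
  have h3 : Subsingleton (k ⊗[R] K) :=
    (Module.FaithfullyFlat.subsingleton_tensorProduct_iff_right k l).1 h2
  exact IsLocalRing.subsingleton_tensorProduct.1 h3

lemma exists_min_pres [IsLocalRing R] (N : Type) [AddCommGroup N] [Module R N]
    [Module.Finite R N] : ∃ (k : ℕ) (g : (Fin k → R) →ₗ[R] N), Function.Surjective g ∧
      ∀ x, g x = 0 → ∀ i, x i ∈ IsLocalRing.maximalIdeal R := by
  let κ := IsLocalRing.ResidueField R
  let b := Module.finBasis κ (κ ⊗[R] N)
  have hs : ∀ y : κ ⊗[R] N, ∃ x : N, 1 ⊗ₜ x = y :=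
    TensorProduct.mk_surjective R N κ IsLocalRing.residue_surjective
  choose f hf using fun i => hs (b i)
  have hspan := IsLocalRing.span_eq_top_of_tmul_eq_basis f b hf
  refine ⟨_, Fintype.linearCombination R f, ?_, ?_⟩
  · rw [← LinearMap.range_eq_top, Fintype.range_linearCombination, hspan]
  · intro x hx i
    have h1 : ∑ i, IsLocalRing.residue R (x i) • b i = 0 := by
      have h2 : (1 : κ) ⊗ₜ[R] (Fintype.linearCombination R f x) = 0 := by rw [hx, tmul_zero]
      rw [Fintype.linearCombination_apply, tmul_sum] at h2
      rw [← h2]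
      refine Finset.sum_congr rfl fun j _ => ?_
      rw [← hf j, TensorProduct.tmul_smul, ← algebraMap_smul κ (x j)]
      rfl
    have := Fintype.linearIndependent_iff.1 b.linearIndependent _ h1 i
    rwa [IsLocalRing.residue_eq_zero_iff] at this

lemma free_descent [IsLocalRing R] [IsLocalRing S] [IsNoetherianRing R]
    [IsLocalHom (algebraMap R S)]
    (N : Type) [AddCommGroup N] [Module R N] [Module.Finite R N]
    (hT : EZ R N (CharacterModule S) 1) (hfree : Module.Free S (S ⊗[R] N)) :
    Module.Free R N := by
  obtain ⟨k, g, hg, hm⟩ := exists_min_pres (R := R) N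
  have hinj : Function.Injective ((LinearMap.ker g).subtype.baseChange S) :=
    lTensor_inj (S := S) (Submodule.injective_subtype _) hg (exact_ker g) hT
  have hsurj : Function.Surjective (g.baseChange S) := LinearMap.lTensor_surjective S hg
  have hex : Function.Exact ((LinearMap.ker g).subtype.baseChange S) (g.baseChange S) :=
    lTensor_exact S (exact_ker g) hg
  obtain ⟨σ, hσ⟩ := Module.projective_lifting_property (g.baseChange S) LinearMap.id hsurj
  obtain ⟨ρ, hρ⟩ : ∃ ρ, ρ ∘ₗ ((LinearMap.ker g).subtype.baseChange S) = LinearMap.id :=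
    (hex.split_tfae'.out 0 1 rfl rfl).1 ⟨hinj, σ, hσ⟩ |>.2
  have htop : (⊤ : Submodule S (S ⊗[R] LinearMap.ker g)) ≤
      IsLocalRing.maximalIdeal S • ⊤ := by
    rintro z -
    induction z with
    | zero => exact zero_mem _
    | add x y hx hy => exact add_mem hx hy
    | tmul s x =>
      have h1 : s ⊗ₜ[R] x = ρ (s ⊗ₜ[R] (x : Fin k → R)) :=
        (LinearMap.congr_fun hρ (s ⊗ₜ[R] x)).symm
      have h2 : s ⊗ₜ[R] (x : Fin k → R) =
          ∑ i, algebraMap R S (x.1 i) • (s ⊗ₜ[R] (Pi.single i 1 : Fin k → R)) := by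
        conv_lhs => rw [pi_eq_sum_univ' x.1]
        rw [tmul_sum]
        refine Finset.sum_congr rfl fun i _ => ?_
        rw [tmul_smul, algebraMap_smul]
      rw [h1, h2, map_sum]
      refine sum_mem fun i _ => ?_
      rw [map_smul]
      refine Submodule.smul_mem_smul ?_ trivial
      have := hm x.1 x.2 i
      rw [IsLocalRing.mem_maximalIdeal, mem_nonunits_iff] at this ⊢
      exact fun h => this (isUnit_of_map_unit _ _ h)
  have h0 : (⊤ : Submodule S (S ⊗[R] LinearMap.ker g)) = ⊥ :=
    Submodule.eq_bot_of_le_smul_of_le_jacobson_bot (IsLocalRing.maximalIdeal S) ⊤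
      (Module.Finite.fg_top) htop (IsLocalRing.maximalIdeal_le_jacobson _)
  have hsub : Subsingleton (S ⊗[R] LinearMap.ker g) :=
    (Submodule.subsingleton_iff S).1 (subsingleton_of_bot_eq_top h0.symm)
  have hk := subsingleton_of_baseChange (S := S) _ hsub
  have hker : LinearMap.ker g = ⊥ := Submodule.eq_bot_of_subsingleton
  exact Module.Free.of_equiv (LinearEquiv.ofBijective g ⟨LinearMap.ker_eq_bot.1 hker, hg⟩)

lemma main_aux [IsLocalRing R] [IsLocalRing S] [IsNoetherianRing R]
    [IsLocalHom (algebraMap R S)] {n : ℕ}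
    (hb : ∀ (N : Type) [AddCommGroup N] [Module R N] (i : ℕ), n ≤ i →
      EZ R N (CharacterModule S) (i + 1)) (hS : ARC S) (m : ℕ) :
    ∀ (N : Type) [AddCommGroup N] [Module R N] [Module.Finite R N],
    (∀ i, EZ R N R (i + 1)) → (∀ i, EZ R N N (i + 1)) →
    (∀ i, m ≤ i → EZ R N (CharacterModule S) (i + 1)) → Module.Free R N := by
  induction m with
  | zero =>
    intro N _ _ _ h1 h2 h3
    have h3' := fun i => h3 i (Nat.zero_le i)
    refine free_descent (S := S) N (h3' 0) ?_
    refine hS (ModuleCat.of S (S ⊗[R] N)) (inferInstanceAs (Module.Finite S (S ⊗[R] N))) ?_ ?_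
    · intro i hi
      obtain ⟨j, rfl⟩ : ∃ j, i = j + 1 := ⟨i - 1, by omega⟩
      rw [extGroup_iff]
      exact EZ.congr_right (AlgebraTensorModule.rid R S S)
        (ext_baseChange hb (fun i => EZ.proj i) j N h1 h3')
    · intro i hi
      obtain ⟨j, rfl⟩ : ∃ j, i = j + 1 := ⟨i - 1, by omega⟩
      rw [extGroup_iff]
      exact ext_baseChange hb h3' j N h2 h3'
  | succ m ih =>
    intro N _ _ _ h1 h2 h3
    obtain ⟨k, g, hg⟩ := exists_pres (R := R) N
    have hNK : ∀ i, EZ R N (LinearMap.ker g) (i + 2) := fun i =>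
      EZ.coleft (Submodule.injective_subtype _) hg (exact_ker g) (h2 i) (EZ.copi (h1 (i + 1)) k)
    have hfree : Module.Free R (LinearMap.ker g) := by
      refine ih _ (fun i => ?_) (fun i => ?_) (fun i hi => ?_)
      · exact EZ.left (Submodule.injective_subtype _) hg (exact_ker g) (h1 (i + 1)) (EZ.proj i)
      · exact EZ.left (Submodule.injective_subtype _) hg (exact_ker g) (hNK i) (EZ.proj i)
      · exact EZ.left (Submodule.injective_subtype _) hg (exact_ker g) (h3 (i + 1) (by omega))
          (EZ.proj i)
    have hN1 : EZ R N (LinearMap.ker g) 1 :=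
      EZ.congr_right (Module.finBasis R (LinearMap.ker g)).equivFun.symm (EZ.copi (h1 0) _)
    obtain ⟨ρ, hρ⟩ := EZ.extend (Submodule.injective_subtype _) hg (exact_ker g) hN1 LinearMap.id
    obtain ⟨σ, hσ⟩ : ∃ σ, g ∘ₗ σ = LinearMap.id :=
      ((exact_ker g).split_tfae'.out 1 0 rfl rfl).1
        ⟨hg, ρ, hρ⟩ |>.2
    have : Module.Projective R N := Module.Projective.of_split σ g hσ
    exact Module.free_of_flat_of_isLocalRing

end

end ARCaux

/-- Descent of (ARC) along a local homomorphism of finite flat dimension. -/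
theorem stmt_14 (R S : Type) [CommRing R] [CommRing S]
    [IsNoetherianRing R] [IsNoetherianRing S] [IsLocalRing R] [IsLocalRing S]
    [Algebra R S] (hloc : IsLocalHom (algebraMap R S))
    (hfd : ∃ n : ℕ, FlatDimLE R n (ModuleCat.of R S))
    (hS : ARC S) : ARC R := by
  obtain ⟨n, hn⟩ := hfd
  have hb : ∀ (N : Type) [AddCommGroup N] [Module R N] (i : ℕ), n ≤ i →
      ARCaux.EZ R N (CharacterModule S) (i + 1) := ARCaux.fd_bound hn
  intro M hM h1 h2
  exact ARCaux.main_aux hb hS n M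
    (fun i => (ARCaux.extGroup_iff R M (ModuleCat.of R R) i).1 (h1 (i + 1) (Nat.succ_pos i)))
    (fun i => (ARCaux.extGroup_iff R M M i).1 (h2 (i + 1) (Nat.succ_pos i)))
    (fun i hi => hb M i hi)
end
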